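/- arXiv:2506.06934 — 8 statements merged into one kernel-verified Lean document; each statement's English description precedes it below -/
import Mathlib

section
/- For all integers a, b ≥ 1, the characteristic polynomial of the adjacency matrix of the double star P_2(a,b) equals x^{a+b+2} − (a+b+1)·x^{a+b} + a·b·x^{a+b−2}. -/
/-!
The adjacency matrix of the double star has rank at most `4`. Writing `u`, `v` for the centers,
it factors as `P * Q`, where the four columns of `P` are the indicators of `u`, of the leaves at
`u`, of `v` and of the leaves at `v`, and the rows of `Q` are the corresponding rows of the
adjacency matrix (all leaves at a given center have the same row). Since `P * Q` and `Q * P` have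
the same characteristic polynomial up to a power of `X`, it remains to compute that of the
`4 × 4` matrix `Q * P`, the quotient matrix of this partition of the vertices; it is
`X ^ 4 - (a + b + 1) X ^ 2 + a b`.
-/

open Polynomial SimpleGraph

/-- Characteristic polynomial (over ℝ) of the adjacency matrix of a finite simple graph:
`det (x•I - A(G))`. -/
noncomputable def charPoly {V : Type} [Fintype V] [DecidableEq V] (G : SimpleGraph V) :
    Polynomial ℝ :=
  letI := Classical.decRel G.Adj
  Matrix.charpoly (SimpleGraph.adjMatrix ℝ G)

/-- The double star `P₂(a,b)`: an edge whose two endpoints carry `a` and `b` pendant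
leaves respectively.  `Sum.inl none` and `Sum.inr none` are the two centers. -/
def doubleStar (a b : ℕ) : SimpleGraph (Option (Fin a) ⊕ Option (Fin b)) :=
  SimpleGraph.fromRel fun x y =>
    (x = Sum.inl none ∧ (y = Sum.inr none ∨ ∃ i, y = Sum.inl (some i))) ∨
    (x = Sum.inr none ∧ ∃ j, y = Sum.inr (some j))

/-- Two finite graphs are cospectral if their adjacency matrices have the same
characteristic polynomial. -/
def Cospectral {V W : Type} [Fintype V] [DecidableEq V] [Fintype W] [DecidableEq W]
    (G : SimpleGraph V) (H : SimpleGraph W) : Prop :=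
  charPoly G = charPoly H

/-- A graph is determined by its spectrum (DS) if every finite graph cospectral to it is
isomorphic to it. -/
def IsDS {V : Type} [Fintype V] [DecidableEq V] (G : SimpleGraph V) : Prop :=
  ∀ (W : Type) (_ : Fintype W) (_ : DecidableEq W) (H : SimpleGraph W),
    Cospectral G H → Nonempty (G ≃g H)

/-- The graph `A_a`: `K_{2,a}` together with two new pendant vertices, both attached to the
fixed vertex `Sum.inl (Sum.inl 0)` of the partite set of size 2. -/
def graphA (a : ℕ) : SimpleGraph ((Fin 2 ⊕ Fin a) ⊕ Fin 2) :=
  SimpleGraph.fromRel fun x y =>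
    (∃ i j, x = Sum.inl (Sum.inl i) ∧ y = Sum.inl (Sum.inr j)) ∨
    (∃ k, x = Sum.inl (Sum.inl 0) ∧ y = Sum.inr k)

/-- The graph `B_a`: `K_{4,a}` together with one new vertex adjacent to exactly two of the
vertices of the partite set of size 4. -/
def graphB (a : ℕ) : SimpleGraph ((Fin 4 ⊕ Fin a) ⊕ Unit) :=
  SimpleGraph.fromRel fun x y =>
    (∃ i j, x = Sum.inl (Sum.inl i) ∧ y = Sum.inl (Sum.inr j)) ∨
    (∃ i : Fin 4, i.val < 2 ∧ x = Sum.inl (Sum.inl i) ∧ y = Sum.inr ())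

/-- The graph `R`: a 4-cycle `0-1-2-3-0` with pendant vertices `4` and `5` attached to the
adjacent cycle vertices `0` and `1` respectively. -/
def graphR : SimpleGraph (Fin 6) :=
  SimpleGraph.fromRel fun x y =>
    (x = 0 ∧ y = 1) ∨ (x = 1 ∧ y = 2) ∨ (x = 2 ∧ y = 3) ∨ (x = 3 ∧ y = 0) ∨
    (x = 0 ∧ y = 4) ∨ (x = 1 ∧ y = 5)


/-- The indicator vectors, as columns, of the four cells: the left center, its leaves, the right
center, its leaves. -/
def cellMatrix (a b : ℕ) : Matrix (Option (Fin a) ⊕ Option (Fin b)) (Fin 4) ℝ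
  | Sum.inl none => ![1, 0, 0, 0]
  | Sum.inl (some _) => ![0, 1, 0, 0]
  | Sum.inr none => ![0, 0, 1, 0]
  | Sum.inr (some _) => ![0, 0, 0, 1]

/-- Column by column, the adjacencies of a vertex to (any vertex of) each of the four cells, in
the order used by `cellMatrix`. -/
def cellAdjMatrix (a b : ℕ) : Matrix (Fin 4) (Option (Fin a) ⊕ Option (Fin b)) ℝ :=
  Matrix.of fun k x => (match x with
    | Sum.inl none => ![0, 1, 1, 0]
    | Sum.inl (some _) => ![1, 0, 0, 0]
    | Sum.inr none => ![1, 0, 0, 1]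
    | Sum.inr (some _) => ![0, 0, 1, 0] : Fin 4 → ℝ) k

lemma adjMatrix_doubleStar (a b : ℕ) [DecidableRel (doubleStar a b).Adj] :
    (doubleStar a b).adjMatrix ℝ = cellMatrix a b * cellAdjMatrix a b := by
  ext x y
  rw [SimpleGraph.adjMatrix_apply, Matrix.mul_apply, Fin.sum_univ_four]
  rcases x with (_ | i) | (_ | i) <;> rcases y with (_ | j) | (_ | j) <;>
    simp [doubleStar, cellMatrix, cellAdjMatrix]

lemma cellAdjMatrix_mul_cellMatrix (a b : ℕ) :
    cellAdjMatrix a b * cellMatrix a b =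
      !![0, (a : ℝ), 1, 0; 1, 0, 0, 0; 1, 0, 0, (b : ℝ); 0, 0, 1, 0] := by
  ext k l
  rw [Matrix.mul_apply, Fintype.sum_sum_type, Fintype.sum_option, Fintype.sum_option]
  fin_cases k <;> fin_cases l <;> simp [cellMatrix, cellAdjMatrix]

lemma charpoly_quotient (a b : ℝ) :
    (!![0, a, 1, 0; 1, 0, 0, 0; 1, 0, 0, b; 0, 0, 1, 0] : Matrix (Fin 4) (Fin 4) ℝ).charpoly =
      X ^ 4 - C (a + b + 1) * X ^ 2 + C (a * b) := by
  simp [Matrix.charpoly, Matrix.charmatrix_apply, Matrix.det_succ_row_zero, Fin.sum_univ_succ,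
    Fin.succAbove, Matrix.diagonal_apply]
  ring

/-- For all integers `a, b ≥ 1`, the characteristic polynomial of the adjacency
matrix of the double star `P₂(a,b)` equals `x^(a+b+2) - (a+b+1)·x^(a+b) + a·b·x^(a+b-2)`. -/
theorem doubleStar_charPoly (a b : ℕ) (ha : 1 ≤ a) (hb : 1 ≤ b) :
    charPoly (doubleStar a b) =
      X ^ (a + b + 2) - C ((a : ℝ) + b + 1) * X ^ (a + b)
        + C ((a : ℝ) * b) * X ^ (a + b - 2) := by
  have hcard : Fintype.card (Option (Fin a) ⊕ Option (Fin b)) = a + b + 2 := by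
    simp; omega
  rw [charPoly, adjMatrix_doubleStar,
    Matrix.charpoly_mul_comm_of_le _ _ (by rw [hcard]; simp; omega),
    cellAdjMatrix_mul_cellMatrix, charpoly_quotient, hcard, Fintype.card_fin]
  obtain ⟨n, hn⟩ : ∃ n, a + b = n + 2 := ⟨a + b - 2, by omega⟩
  have h4 : n + 2 + 2 - 4 = n := by omega
  rw [hn, h4, Nat.add_sub_cancel]
  ring
end

section
/- For all integers a, b ≥ 1, the multiset of real eigenvalues of the adjacency matrix of the double star P_2(a,b) is {λ1, λ2, 0 with multiplicity a+b−2, −λ2, −λ1}, where λ1 = sqrt(((a+b+1) + sqrt((a−b)^2 + 2(a+b) + 1))/2) and λ2 = sqrt(((a+b+1) − sqrt((a−b)^2 + 2(a+b) + 1))/2), each of λ1, λ2, −λ2, −λ1 occurring with multiplicity one. -/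
/-!
Order the vertices of `P₂(a,b)` as centers, then leaves. The matrix `X·1 - A` becomes the block
matrix `[[K, -B], [-Bᵀ, X·1]]`, with `K = [[X, -1], [-1, X]]` and `B` the center-leaf incidence
matrix. Multiplying on the right by `[[X·1, 0], [Bᵀ, 1]]` makes it block upper triangular with
diagonal blocks `X·K - B Bᵀ` and `X·1`. As `B Bᵀ = diag(a, b)`, taking determinants gives
`χ · X² = ((X² - a)(X² - b) - X²) · X^(a+b)` (`charPoly_doubleStar_mul`). The quartic factor is
`(X² - λ₁²)(X² - λ₂²)`, since `λ₁²` and `λ₂²` have sum `a + b + 1` and product `a b`; cancelling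
`X²` then exhibits `χ` as a product of linear factors.
-/

open Polynomial SimpleGraph

/-- Splits the vertices of `P₂(a,b)` into the two centers and the `a + b` leaves. -/
def doubleStarEquiv (a b : ℕ) :
    Fin 2 ⊕ (Fin a ⊕ Fin b) ≃ Option (Fin a) ⊕ Option (Fin b) where
  toFun
    | .inl 0 => .inl none
    | .inl 1 => .inr none
    | .inr (.inl i) => .inl (some i)
    | .inr (.inr j) => .inr (some j)
  invFun
    | .inl none => .inl 0
    | .inr none => .inl 1
    | .inl (some i) => .inr (.inl i)
    | .inr (some j) => .inr (.inr j)
  left_inv := by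
    rintro (i | i | i)
    · fin_cases i <;> rfl
    · rfl
    · rfl
  right_inv := by
    rintro ((_ | i) | (_ | i)) <;> rfl

/-- The incidence matrix between the two centers of `P₂(a,b)` and its leaves. -/
noncomputable def leafMatrix (a b : ℕ) : Matrix (Fin 2) (Fin a ⊕ Fin b) ℝ[X] :=
  Matrix.of ![Sum.elim (fun _ => 1) (fun _ => 0), Sum.elim (fun _ => 0) (fun _ => 1)]

lemma leafMatrix_mul_transpose (a b : ℕ) :
    leafMatrix a b * (leafMatrix a b).transpose = !![(a : ℝ[X]), 0; 0, (b : ℝ[X])] := by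
  ext1 i j
  fin_cases i <;> fin_cases j <;> simp [leafMatrix, Matrix.mul_apply]

lemma charPoly_doubleStar_eq_det (a b : ℕ) :
    charPoly (doubleStar a b) =
      (Matrix.fromBlocks !![(X : ℝ[X]), -1; -1, X] (-leafMatrix a b)
        (-(leafMatrix a b).transpose) ((X : ℝ[X]) • 1)).det := by
  classical
  unfold charPoly Matrix.charpoly
  rw [← Matrix.det_submatrix_equiv_self (doubleStarEquiv a b)]
  congr 1
  ext1 i j
  simp only [Matrix.submatrix_apply, Matrix.charmatrix_apply, adjMatrix_apply]
  rcases i with i | i | i <;> rcases j with j | j | j <;>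
    (try fin_cases i) <;> (try fin_cases j) <;>
    simp [doubleStarEquiv, doubleStar, leafMatrix,
      Matrix.diagonal_apply, Matrix.one_apply]

lemma charPoly_doubleStar_mul (a b : ℕ) :
    charPoly (doubleStar a b) * X ^ 2 =
      ((X ^ 2 - (a : ℝ[X])) * (X ^ 2 - (b : ℝ[X])) - X ^ 2) * X ^ (a + b) := by
  have h : (Matrix.fromBlocks !![(X : ℝ[X]), -1; -1, X] (-leafMatrix a b)
        (-(leafMatrix a b).transpose) ((X : ℝ[X]) • 1)) *
      (Matrix.fromBlocks ((X : ℝ[X]) • 1) 0 (leafMatrix a b).transpose 1) =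
      Matrix.fromBlocks !![(X : ℝ[X]) ^ 2 - (a : ℝ[X]), -X; -X, X ^ 2 - (b : ℝ[X])]
        (-leafMatrix a b) 0 ((X : ℝ[X]) • 1) := by
    rw [Matrix.fromBlocks_multiply]
    congr 1
    · rw [Matrix.neg_mul, leafMatrix_mul_transpose]
      ext1 i j
      fin_cases i <;> fin_cases j <;> simp <;> ring
    · simp
    · simp
    · simp
  have hd := congrArg Matrix.det h
  rw [Matrix.det_mul, ← charPoly_doubleStar_eq_det, Matrix.det_fromBlocks_zero₁₂,
    Matrix.det_fromBlocks_zero₂₁, Matrix.det_fin_two_of] at hd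
  simp only [Matrix.det_smul, Matrix.det_one, Fintype.card_fin, Fintype.card_sum, mul_one] at hd
  rw [hd]
  ring

/-- the multiset of real eigenvalues of the adjacency matrix of `P₂(a,b)` is
`{λ₁, λ₂, 0^(a+b-2), -λ₂, -λ₁}` with `λ₁, λ₂` as given. -/
theorem doubleStar_spectrum (a b : ℕ) (ha : 1 ≤ a) (hb : 1 ≤ b) :
    (charPoly (doubleStar a b)).roots =
      {Real.sqrt ((((a : ℝ) + b + 1) +
          Real.sqrt (((a : ℝ) - b) ^ 2 + 2 * ((a : ℝ) + b) + 1)) / 2),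
        Real.sqrt ((((a : ℝ) + b + 1) -
          Real.sqrt (((a : ℝ) - b) ^ 2 + 2 * ((a : ℝ) + b) + 1)) / 2),
        -Real.sqrt ((((a : ℝ) + b + 1) -
          Real.sqrt (((a : ℝ) - b) ^ 2 + 2 * ((a : ℝ) + b) + 1)) / 2),
        -Real.sqrt ((((a : ℝ) + b + 1) +
          Real.sqrt (((a : ℝ) - b) ^ 2 + 2 * ((a : ℝ) + b) + 1)) / 2)}
      + Multiset.replicate (a + b - 2) (0 : ℝ) := by
  have hD : (0 : ℝ) ≤ ((a : ℝ) - b) ^ 2 + 2 * ((a : ℝ) + b) + 1 := by positivity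
  have hs2 := Real.sq_sqrt hD
  have hs0 := Real.sqrt_nonneg (((a : ℝ) - b) ^ 2 + 2 * ((a : ℝ) + b) + 1)
  generalize Real.sqrt (((a : ℝ) - b) ^ 2 + 2 * ((a : ℝ) + b) + 1) = s at hs2 hs0 ⊢
  -- The inner root is at most `a + b + 1`, because `(a + b + 1)² - s² = 4ab`.
  have hs : s ≤ (a : ℝ) + b + 1 := by
    refine abs_le_of_sq_le_sq' ?_ (by positivity) |>.2
    have : (0 : ℝ) ≤ (a : ℝ) * b := by positivity
    nlinarith
  have h1 := Real.sq_sqrt (show 0 ≤ ((a : ℝ) + b + 1 + s) / 2 by positivity)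
  have h2 := Real.sq_sqrt (show 0 ≤ ((a : ℝ) + b + 1 - s) / 2 by linarith)
  generalize Real.sqrt (((a : ℝ) + b + 1 + s) / 2) = l at h1 ⊢
  generalize Real.sqrt (((a : ℝ) + b + 1 - s) / 2) = m at h2 ⊢
  have hsum : C l ^ 2 + C m ^ 2 = (a : ℝ[X]) + b + 1 := by
    have : l ^ 2 + m ^ 2 = (a : ℝ) + b + 1 := by linarith
    simpa using congrArg (C : ℝ → ℝ[X]) this
  have hprod : C l ^ 2 * C m ^ 2 = (a : ℝ[X]) * b := by
    have : l ^ 2 * m ^ 2 = (a : ℝ) * b := by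
      rw [h1, h2]
      linarith
    simpa using congrArg (C : ℝ → ℝ[X]) this
  have key : charPoly (doubleStar a b) =
      ((({l, m, -m, -l} : Multiset ℝ) + Multiset.replicate (a + b - 2) 0).map
        fun r => X - C r).prod := by
    refine mul_right_cancel₀ (pow_ne_zero 2 (X_ne_zero (R := ℝ))) ?_
    rw [charPoly_doubleStar_mul]
    obtain ⟨n, hn⟩ : ∃ n, a + b = n + 2 := ⟨a + b - 2, by omega⟩
    simp only [hn, Nat.add_sub_cancel, Multiset.insert_eq_cons, Multiset.map_add,
      Multiset.map_cons, Multiset.map_singleton, Multiset.map_replicate, Multiset.prod_add,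
      Multiset.prod_cons, Multiset.prod_singleton, Multiset.prod_replicate, C_neg, C_0, sub_zero]
    linear_combination (X ^ (n + 4)) * hsum - X ^ (n + 2) * hprod
  rw [key, roots_multiset_prod_X_sub_C]
end

section
/- The double star P_2(a,b) is not determined by its spectrum in each of the following cases: (i) a = 2 and b is odd with b ≥ 3; (ii) a = 3 and b is even with b ≥ 2; (iii) a = 4 and b ≥ 1; (iv) a = 8 and b ≥ 2; (v) a = 9 and b ≥ 2; (vi) a = 2n−1 and b = n for an integer n ≥ 2; (vii) a = 2r and b = r−1 for an integer r ≥ 2; (viii) a = 2m and b = m+1 for an integer m ≥ 2. That is, in each case there exists a finite simple graph cospectral to P_2(a,b) but not isomorphic to it. -/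
/-!
Each double star in the list has a mate obtained by blowing up a path on five vertices and adding
isolated vertices.

Let the path have vertices `2 - 0 - 4 - 1 - 3`, let `5` be an isolated vertex, and replace the
vertices `0, …, 5` by independent sets of sizes `i, j, x, y, z, w`. The adjacency matrix of the
resulting graph is `Pᵀ Q P`, with `P` the class-indicator matrix and `Q` the adjacency matrix of
the base graph. Since `P Pᵀ` is the diagonal matrix of class sizes, the nonzero eigenvalues are
those of a `6 × 6` matrix (`X_pow_mul_charPoly`), whose characteristic polynomial is
`X⁶ - e X⁴ + c X²` with `e = i (x + z) + j (y + z)` and `c = i j (x y + x z + y z)`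
(`charpoly_quotient`).

The double star `P₂(a,b)` is itself such a blow-up, of sizes `1, b, a, 0, 1, 0`, so it has
`e = a + b + 1` and `c = a b`. Hence any solution of `e = a + b + 1`, `c = a b`
on `a + b + 2` vertices yields a cospectral graph; if `w ≥ 1` this graph has an isolated vertex and
so is not isomorphic to the double star (`not_isDS_of_sizes`). The eight cases are eight explicit
families of solutions.
-/

open Polynomial SimpleGraph

/-- The path `2 - 0 - 4 - 1 - 3` together with the isolated vertex `5`. -/
def baseGraph : SimpleGraph (Fin 6) :=
  SimpleGraph.fromRel fun p q =>
    (p = 0 ∧ q = 2) ∨ (p = 0 ∧ q = 4) ∨ (p = 1 ∧ q = 3) ∨ (p = 1 ∧ q = 4)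

instance : DecidableRel baseGraph.Adj := by
  unfold baseGraph; infer_instance

lemma baseGraph_adj (p q : Fin 6) : baseGraph.Adj p q ↔ p ≠ q ∧
    (((p = 0 ∧ q = 2) ∨ (p = 0 ∧ q = 4) ∨ (p = 1 ∧ q = 3) ∨ (p = 1 ∧ q = 4)) ∨
      ((q = 0 ∧ p = 2) ∨ (q = 0 ∧ p = 4) ∨ (q = 1 ∧ p = 3) ∨ (q = 1 ∧ p = 4))) :=
  Iff.rfl

/-- The blow-up of `baseGraph` in which vertex `c` is replaced by `s c` independent vertices. -/
def blowUp (s : Fin 6 → ℕ) : SimpleGraph (Σ c : Fin 6, Fin (s c)) :=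
  baseGraph.comap Sigma.fst

lemma X_pow_mul_charpoly_factor {V n : Type} [Fintype V] [DecidableEq V] [Fintype n]
    [DecidableEq n] (k : ℕ) (hk : Fintype.card n = k) (P : Matrix n V ℝ) (Q D : Matrix n n ℝ)
    (h : P * P.transpose = D) :
    X ^ k * (P.transpose * (Q * P)).charpoly = X ^ Fintype.card V * (Q * D).charpoly := by
  rw [← h, ← Matrix.mul_assoc Q P P.transpose, ← hk]
  exact Matrix.charpoly_mul_comm' P.transpose (Q * P)

/-- If adjacency in `G` depends only on the classes given by `f`, the characteristic polynomial of
`G` is, up to a power of `X`, that of the weighted quotient matrix. -/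
lemma X_pow_mul_charPoly {V : Type} [Fintype V] [DecidableEq V] (G : SimpleGraph V)
    (f : V → Fin 6) (s : Fin 6 → ℕ) (hG : ∀ u v, G.Adj u v ↔ baseGraph.Adj (f u) (f v))
    (hs : ∀ c, (Finset.univ.filter fun v => f v = c).card = s c) :
    X ^ 6 * charPoly G = X ^ Fintype.card V *
      (baseGraph.adjMatrix ℝ * Matrix.diagonal fun c => (s c : ℝ)).charpoly := by
  classical
  let P : Matrix (Fin 6) V ℝ := Matrix.of fun c v => if f v = c then 1 else 0
  have h1 : (letI := Classical.decRel G.Adj; G.adjMatrix ℝ) =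
      P.transpose * (baseGraph.adjMatrix ℝ * P) := by
    ext u v
    rw [Matrix.mul_apply, Finset.sum_eq_single (f u)]
    · simp [Matrix.mul_apply, P, SimpleGraph.adjMatrix_apply, hG]
    · intro c _ hc
      simp [P, hc.symm]
    · simp
  have h2 : P * P.transpose = Matrix.diagonal fun c => (s c : ℝ) := by
    ext c d
    rw [Matrix.mul_apply, Matrix.diagonal_apply]
    split_ifs with h
    · subst h
      simp [P, ← hs, ← ite_and]
    · refine Finset.sum_eq_zero fun v _ => ?_
      simp only [P, Matrix.of_apply, Matrix.transpose_apply]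
      rw [mul_ite, mul_one, mul_zero, ← ite_and, if_neg]
      rintro ⟨rfl, rfl⟩
      exact h rfl
  unfold charPoly
  rw [h1]
  exact X_pow_mul_charpoly_factor 6 (Fintype.card_fin 6) P _ _ h2

lemma charpoly_quotient_s2 (s : Fin 6 → ℕ) :
    (baseGraph.adjMatrix ℝ * Matrix.diagonal fun c => (s c : ℝ)).charpoly =
      X ^ 6 - C ((s 0 * (s 2 + s 4) + s 1 * (s 3 + s 4) : ℕ) : ℝ) * X ^ 4 +
        C ((s 0 * s 1 * (s 2 * s 3 + s 2 * s 4 + s 3 * s 4) : ℕ) : ℝ) * X ^ 2 := by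
  have hQ : baseGraph.adjMatrix ℝ = !![0,0,1,0,1,0; 0,0,0,1,1,0; 1,0,0,0,0,0; 0,1,0,0,0,0;
      1,1,0,0,0,0; 0,0,0,0,0,0] := by
    ext p q
    rw [SimpleGraph.adjMatrix_apply]
    fin_cases p <;> fin_cases q <;> simp [baseGraph_adj]
  rw [hQ]
  have hM : (!![0,0,1,0,1,0; 0,0,0,1,1,0; 1,0,0,0,0,0; 0,1,0,0,0,0;
      1,1,0,0,0,0; 0,0,0,0,0,0] * Matrix.diagonal fun c => (s c : ℝ)).charmatrix =
      !![X,0,-C (s 2 : ℝ),0,-C (s 4 : ℝ),0; 0,X,0,-C (s 3 : ℝ),-C (s 4 : ℝ),0;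
         -C (s 0 : ℝ),0,X,0,0,0; 0,-C (s 1 : ℝ),0,X,0,0;
         -C (s 0 : ℝ),-C (s 1 : ℝ),0,0,X,0; 0,0,0,0,0,X] := by
    ext p q : 1
    rw [Matrix.charmatrix_apply, Matrix.mul_diagonal]
    fin_cases p <;> fin_cases q <;> simp
  rw [Matrix.charpoly, hM]
  simp [Matrix.det_succ_row_zero, Fin.sum_univ_succ, Fin.succAbove, Matrix.submatrix]
  ring

lemma charPoly_doubleStar (a b : ℕ) :
    X ^ 6 * charPoly (doubleStar a b) = X ^ (a + b + 2) *
      (X ^ 6 - C ((a + b + 1 : ℕ) : ℝ) * X ^ 4 + C ((a * b : ℕ) : ℝ) * X ^ 2) := by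
  let f : Option (Fin a) ⊕ Option (Fin b) → Fin 6 :=
    Sum.elim (fun o => o.elim 0 fun _ => 2) (fun o => o.elim 4 fun _ => 1)
  have h := X_pow_mul_charPoly (doubleStar a b) f ![1, b, a, 0, 1, 0] ?_ ?_
  · rw [h, charpoly_quotient_s2]
    simp
    ring
  · rintro ((_ | u) | (_ | u)) ((_ | v) | (_ | v)) <;> simp [doubleStar, baseGraph, f]
  · intro c
    rw [Finset.card_filter, Fintype.sum_sum_type, Fintype.sum_option, Fintype.sum_option]
    fin_cases c <;> simp [f]

lemma charPoly_blowUp (s : Fin 6 → ℕ) :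
    X ^ 6 * charPoly (blowUp s) = X ^ (∑ c, s c) *
      (X ^ 6 - C ((s 0 * (s 2 + s 4) + s 1 * (s 3 + s 4) : ℕ) : ℝ) * X ^ 4 +
        C ((s 0 * s 1 * (s 2 * s 3 + s 2 * s 4 + s 3 * s 4) : ℕ) : ℝ) * X ^ 2) := by
  have h := X_pow_mul_charPoly (blowUp s) Sigma.fst s (fun _ _ => Iff.rfl) ?_
  · rw [h, charpoly_quotient_s2]
    simp
  · intro c
    rw [Finset.card_filter, Fintype.sum_sigma, Finset.sum_eq_single c]
    · simp
    · intro d _ hd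
      simp [hd]
    · simp

lemma doubleStar_exists_adj (a b : ℕ) (v) : ∃ u, (doubleStar a b).Adj v u := by
  rcases v with (_ | v) | (_ | v)
  · exact ⟨Sum.inr none, by simp [doubleStar]⟩
  · exact ⟨Sum.inl none, by simp [doubleStar]⟩
  · exact ⟨Sum.inl none, by simp [doubleStar]⟩
  · exact ⟨Sum.inr none, by simp [doubleStar]⟩

/-- Class sizes with the same number of vertices, the same `e` and the same `c` as `P₂(a,b)`, and
with at least one isolated vertex left over, give a non-isomorphic cospectral mate. -/
lemma not_isDS_of_sizes {a b : ℕ} (i j x y z : ℕ) (hn : i + j + x + y + z < a + b + 2)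
    (he : i * (x + z) + j * (y + z) = a + b + 1)
    (hc : i * j * (x * y + x * z + y * z) = a * b) : ¬ IsDS (doubleStar a b) := by
  intro hDS
  obtain ⟨w, hw⟩ : ∃ w, i + j + x + y + z + (w + 1) = a + b + 2 :=
    ⟨a + b + 2 - (i + j + x + y + z) - 1, by omega⟩
  let s : Fin 6 → ℕ := ![i, j, x, y, z, w + 1]
  have hcard : ∑ c, s c = a + b + 2 := by
    simp [s, Fin.sum_univ_succ]
    omega
  have hco : Cospectral (doubleStar a b) (blowUp s) := by
    refine mul_left_cancel₀ (pow_ne_zero 6 (X_ne_zero (R := ℝ))) ?_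
    rw [charPoly_doubleStar, charPoly_blowUp, hcard, ← he, ← hc]
    rfl
  obtain ⟨φ⟩ := hDS _ _ _ _ hco
  obtain ⟨u, hu⟩ := doubleStar_exists_adj a b (φ.symm ⟨5, (0 : Fin (w + 1))⟩)
  have h := φ.map_rel_iff.mpr hu
  rw [RelIso.apply_symm_apply] at h
  simp [blowUp, baseGraph] at h

/-- the double star `P₂(a,b)` is not determined by its spectrum in each of the
listed eight cases. -/
theorem doubleStar_not_DS_cases :
    (∀ b : ℕ, Odd b → 3 ≤ b → ¬ IsDS (doubleStar 2 b)) ∧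
    (∀ b : ℕ, Even b → 2 ≤ b → ¬ IsDS (doubleStar 3 b)) ∧
    (∀ b : ℕ, 1 ≤ b → ¬ IsDS (doubleStar 4 b)) ∧
    (∀ b : ℕ, 2 ≤ b → ¬ IsDS (doubleStar 8 b)) ∧
    (∀ b : ℕ, 2 ≤ b → ¬ IsDS (doubleStar 9 b)) ∧
    (∀ n : ℕ, 2 ≤ n → ¬ IsDS (doubleStar (2 * n - 1) n)) ∧
    (∀ r : ℕ, 2 ≤ r → ¬ IsDS (doubleStar (2 * r) (r - 1))) ∧
    (∀ m : ℕ, 2 ≤ m → ¬ IsDS (doubleStar (2 * m) (m + 1))) := by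
  refine ⟨?_, ?_, ?_, ?_, ?_, ?_, ?_, ?_⟩
  · rintro _ ⟨k, rfl⟩ h
    exact not_isDS_of_sizes 2 1 k 1 1 (by omega) (by ring) (by ring)
  · rintro _ ⟨k, rfl⟩ h
    exact not_isDS_of_sizes k 2 1 1 1 (by omega) (by ring) (by ring)
  · intro b h
    obtain ⟨k, rfl⟩ := Nat.exists_eq_add_of_le' h
    exact not_isDS_of_sizes 1 1 2 k 2 (by omega) (by ring) (by ring)
  · intro b h
    obtain ⟨k, rfl⟩ := Nat.exists_eq_add_of_le' h
    exact not_isDS_of_sizes 2 1 2 (k + 1) 2 (by omega) (by ring) (by ring)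
  · intro b h
    obtain ⟨k, rfl⟩ := Nat.exists_eq_add_of_le' h
    exact not_isDS_of_sizes 1 1 6 k 3 (by omega) (by ring) (by ring)
  · intro n h
    obtain ⟨k, rfl⟩ := Nat.exists_eq_add_of_le' h
    rw [show 2 * (k + 2) - 1 = 2 * k + 3 by omega]
    exact not_isDS_of_sizes (k + 2) 1 1 (k + 1) 1 (by omega) (by ring) (by ring)
  · intro r h
    obtain ⟨k, rfl⟩ := Nat.exists_eq_add_of_le' h
    rw [show k + 2 - 1 = k + 1 by omega]
    exact not_isDS_of_sizes (k + 2) 2 0 (k + 1) 1 (by omega) (by ring) (by ring)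
  · intro m h
    exact not_isDS_of_sizes (m + 1) 1 2 m 0 (by omega) (by ring) (by ring)
end

section
/- For every integer a ≥ 1, the characteristic polynomial of the adjacency matrix of the graph A_a equals x^{a+4} − (2a+2)·x^{a+2} + 2a·x^{a}. -/
/-!
The vertices of `A_a` fall into four classes (the hub carrying the leaves, the other hub, the `a`
common neighbours of the hubs, the two leaves), and vertices in one class have the same neighbours.
So the adjacency matrix factors as `P * Q`, where the columns of `P` (`classMatrix`) are the
indicator vectors of the classes and the rows of `Q` (`neighborMatrix`) are the indicator vectors
of the neighbourhoods. Since `P * Q` and `Q * P` have the same characteristic polynomial up to a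
power of `X`, here `X ^ a`, it suffices to expand the determinant for the `4 × 4` quotient matrix
`Q * P`.
-/

open Polynomial SimpleGraph

/-- Indicator vectors (as columns) of the four vertex classes of `A_a`: hub carrying the leaves,
other hub, common neighbours of the hubs, leaves. It is given row by row. -/
def classMatrix (a : ℕ) : Matrix ((Fin 2 ⊕ Fin a) ⊕ Fin 2) (Fin 4) ℝ
  | Sum.inl (Sum.inl i) => if i = 0 then ![1, 0, 0, 0] else ![0, 1, 0, 0]
  | Sum.inl (Sum.inr _) => ![0, 0, 1, 0]
  | Sum.inr _ => ![0, 0, 0, 1]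

/-- The matrix whose row `r` is the indicator vector of the neighbourhood shared by the
vertices in class `r` of `A_a`; it is given column by column. -/
def neighborMatrix (a : ℕ) : Matrix (Fin 4) ((Fin 2 ⊕ Fin a) ⊕ Fin 2) ℝ :=
  fun r v => match v with
  | Sum.inl (Sum.inl i) => if i = 0 then ![0, 0, 1, 1] r else ![0, 0, 1, 0] r
  | Sum.inl (Sum.inr _) => ![1, 1, 0, 0] r
  | Sum.inr _ => ![1, 0, 0, 0] r

theorem adjMatrix_graphA (a : ℕ) [DecidableRel (graphA a).Adj] :
    (graphA a).adjMatrix ℝ = classMatrix a * neighborMatrix a := by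
  ext v w
  rw [SimpleGraph.adjMatrix_apply, Matrix.mul_apply, Fin.sum_univ_four]
  rcases v with (i | j) | k <;> rcases w with (i' | j') | k' <;>
    simp only [graphA, SimpleGraph.fromRel_adj, classMatrix, neighborMatrix]
  all_goals try fin_cases i
  all_goals try fin_cases i'
  all_goals simp

/-- The product in the other order is the quotient matrix of the partition into classes: its
entry `(r, s)` counts the neighbours in class `s` of a vertex in class `r`. -/
theorem neighborMatrix_mul_classMatrix (a : ℕ) :
    neighborMatrix a * classMatrix a =
      !![0, 0, (a : ℝ), 2; 0, 0, (a : ℝ), 0; 1, 1, 0, 0; 1, 0, 0, 0] := by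
  ext r s
  rw [Matrix.mul_apply, Fintype.sum_sum_type, Fintype.sum_sum_type]
  fin_cases r <;> fin_cases s <;> simp [classMatrix, neighborMatrix]

theorem charpoly_quotientMatrix (t : ℝ) :
    (!![0, 0, t, 2; 0, 0, t, 0; 1, 1, 0, 0; 1, 0, 0, 0] : Matrix (Fin 4) (Fin 4) ℝ).charpoly =
      X ^ 4 - C (2 * t + 2) * X ^ 2 + C (2 * t) := by
  rw [Matrix.charpoly, Matrix.det_succ_row_zero]
  simp [Fin.sum_univ_four, Matrix.det_fin_three, Matrix.charmatrix_apply, Fin.succAbove,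
    Matrix.diagonal_apply, map_ofNat C 2]
  ring

/-- for every `a ≥ 1`, `φ(A_a) = x^(a+4) - (2a+2)·x^(a+2) + 2a·x^a`. -/
theorem graphA_charPoly (a : ℕ) (ha : 1 ≤ a) :
    charPoly (graphA a) =
      X ^ (a + 4) - C (2 * (a : ℝ) + 2) * X ^ (a + 2) + C (2 * (a : ℝ)) * X ^ a := by
  rw [charPoly, adjMatrix_graphA, Matrix.charpoly_mul_comm_of_le _ _ (by simp),
    neighborMatrix_mul_classMatrix, charpoly_quotientMatrix]
  have hcard : Fintype.card ((Fin 2 ⊕ Fin a) ⊕ Fin 2) - Fintype.card (Fin 4) = a := by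
    simp
  rw [hcard]
  ring
end

section
/- For every integer a ≥ 1, the characteristic polynomial of the adjacency matrix of the graph B_a equals x^{a+5} − (4a+2)·x^{a+3} + 4a·x^{a+1}. -/
/-!
The adjacency matrix has rank at most four. With `e`, `f`, `u`, `w` the indicator vectors of the
partite set of size 4, the partite set of size `a`, the two neighbours of the extra vertex, and
the extra vertex itself, it equals `e fᵀ + f eᵀ + u wᵀ + w uᵀ`, that is `P * Q` with
`P = [e f u w]` and `Q = [f e w u]ᵀ`. Hence its characteristic polynomial is `X ^ (a + 1)` times
that of the `4 × 4` matrix `Q * P` of inner products, which is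
`X ^ 4 - (4 a + 2) X ^ 2 + 4 a`.
-/

open Polynomial SimpleGraph

/-- The matrix whose columns are the indicator vectors of the partite set of size 4, the partite
set of size `a`, the two neighbours of the extra vertex, and the extra vertex. -/
def leftFactor (a : ℕ) : Matrix ((Fin 4 ⊕ Fin a) ⊕ Unit) (Fin 4) ℝ :=
  Matrix.of fun x => match x with
    | Sum.inl (Sum.inl i) => ![1, 0, if i.val < 2 then 1 else 0, 0]
    | Sum.inl (Sum.inr _) => ![0, 1, 0, 0]
    | Sum.inr _ => ![0, 0, 0, 1]

/-- The transpose of `leftFactor` with its rows swapped in the pairs `(0, 1)` and `(2, 3)`. -/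
def rightFactor (a : ℕ) : Matrix (Fin 4) ((Fin 4 ⊕ Fin a) ⊕ Unit) ℝ :=
  Matrix.of fun k x => (match x with
    | Sum.inl (Sum.inl i) => ![0, 1, 0, if i.val < 2 then 1 else 0]
    | Sum.inl (Sum.inr _) => ![1, 0, 0, 0]
    | Sum.inr _ => ![0, 0, 1, 0]) k

lemma graphB_adjMatrix_eq (a : ℕ) [DecidableRel (graphB a).Adj] :
    (graphB a).adjMatrix ℝ = leftFactor a * rightFactor a := by
  ext x y
  rw [Matrix.mul_apply, Fin.sum_univ_four, SimpleGraph.adjMatrix_apply]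
  rcases x with (i | j) | ⟨⟩ <;> rcases y with (k | l) | ⟨⟩ <;>
    simp [graphB, leftFactor, rightFactor]

lemma rightFactor_mul_leftFactor (a : ℕ) :
    rightFactor a * leftFactor a =
      !![0, (a : ℝ), 0, 0; 4, 0, 2, 0; 0, 0, 0, 1; 2, 0, 2, 0] := by
  ext k l
  rw [Matrix.mul_apply, Fintype.sum_sum_type, Fintype.sum_sum_type, Fin.sum_univ_four]
  fin_cases k <;> fin_cases l <;> norm_num [leftFactor, rightFactor]

lemma charpoly_gram (a : ℝ) :
    (!![0, a, 0, 0; 4, 0, 2, 0; 0, 0, 0, 1; 2, 0, 2, 0] : Matrix (Fin 4) (Fin 4) ℝ).charpoly =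
      X ^ 4 - C (4 * a + 2) * X ^ 2 + C (4 * a) := by
  have h : (!![0, a, 0, 0; 4, 0, 2, 0; 0, 0, 0, 1; 2, 0, 2, 0] :
      Matrix (Fin 4) (Fin 4) ℝ).charmatrix =
      !![X, -C a, 0, 0; -4, X, -2, 0; 0, 0, X, -1; -2, 0, -2, X] := by
    ext1 k l
    fin_cases k <;> fin_cases l <;> simp <;> rfl
  have h4 : (C 4 : ℝ[X]) = 4 := rfl
  have h2 : (C 2 : ℝ[X]) = 2 := rfl
  rw [Matrix.charpoly, h, Matrix.det_succ_row_zero]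
  simp [Fin.sum_univ_succ, Matrix.det_fin_three, Fin.succAbove, h4, h2]
  ring

/-- for every `a ≥ 1`, `φ(B_a) = x^(a+5) - (4a+2)·x^(a+3) + 4a·x^(a+1)`. -/
theorem graphB_charPoly (a : ℕ) (ha : 1 ≤ a) :
    charPoly (graphB a) =
      X ^ (a + 5) - C (4 * (a : ℝ) + 2) * X ^ (a + 3) + C (4 * (a : ℝ)) * X ^ (a + 1) := by
  unfold charPoly
  let _ := Classical.decRel (graphB a).Adj
  change ((graphB a).adjMatrix ℝ).charpoly = _
  have hcard : Fintype.card ((Fin 4 ⊕ Fin a) ⊕ Unit) = a + 5 := by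
    simp; omega
  rw [graphB_adjMatrix_eq, Matrix.charpoly_mul_comm_of_le _ _ (by rw [hcard]; simp),
    rightFactor_mul_leftFactor, charpoly_gram, hcard, Fintype.card_fin,
    show a + 5 - 4 = a + 1 by omega]
  ring
end

section
/- For every integer n ≥ 1, if G is a finite simple graph cospectral to the double star P_2(1,n), then G has no induced subgraph isomorphic to 2K_2, no induced subgraph isomorphic to R, and no induced subgraph isomorphic to the double star P_2(2,2). -/
/-!
The proof compares quadratic forms of adjacency matrices instead of computing spectra.

Cospectral graphs have orthogonally similar adjacency matrices, so if `F` is an induced subgraph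
of a graph cospectral to `H = P₂(1,n)`, there is a linear isometry `ℝ^F → ℝ^H` pulling the
adjacency form of `H` back to that of `F` (`exists_isometry`). Two facts about `H` limit what
`F` can be, where `u`, `v` are the centers with `1` and `n` leaves.

* On the hyperplane `x_u + n x_v = 0` the form of `H` is strictly less than the squared norm, so
  `F` has at most one eigenvalue `≥ 1` (`no_two_dim`). This excludes `2K₂`, with eigenvalues
  `1, 1`, and `P₂(2,2)`, with eigenvalues `2, 1`.
* On the subspace `x_u = x_v = 0` of codimension two the form of `H` vanishes, so `F` has at most
  two positive eigenvalues (`no_three_dim`). This excludes `R`, which has three.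
-/

open Polynomial SimpleGraph

/-- Real symmetric matrices with the same characteristic polynomial are orthogonally similar,
even when indexed by different types: match their (sorted) eigenbases. -/
lemma exists_orthogonal_of_charpoly_eq {V W : Type} [Fintype V] [DecidableEq V] [Fintype W]
    [DecidableEq W] {A : Matrix V V ℝ} {B : Matrix W W ℝ} (hA : A.IsHermitian)
    (hB : B.IsHermitian) (h : A.charpoly = B.charpoly) :
    ∃ S : Matrix W V ℝ, S.transpose * S = 1 ∧ S.transpose * B * S = A := by
  have hcard : Fintype.card V = Fintype.card W := by
    rw [← A.charpoly_natDegree_eq_dim, h, B.charpoly_natDegree_eq_dim]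
  let e : W ≃ V := (Fintype.equivOfCardEq hcard).symm
  have hC : (Matrix.reindex e e B).IsHermitian := hB.submatrix _
  have hev : hC.eigenvalues = hA.eigenvalues := by
    rw [Matrix.IsHermitian.eigenvalues_eq_eigenvalues_iff, Matrix.charpoly_reindex, h]
  have h1 := hA.spectral_theorem
  have h2 := hC.spectral_theorem
  rw [hev] at h2
  rw [Unitary.conjStarAlgAut_apply] at h1 h2
  set U := hA.eigenvectorUnitary
  set T := hC.eigenvectorUnitary
  set D := Matrix.diagonal (RCLike.ofReal ∘ hA.eigenvalues : V → ℝ)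
  have hU : (U : Matrix V V ℝ) * star (U : Matrix V V ℝ) = 1 := Unitary.coe_mul_star_self U
  have hT : star (T : Matrix V V ℝ) * (T : Matrix V V ℝ) = 1 := Unitary.coe_star_mul_self T
  -- `S₀ = T U*` carries the eigenbasis of `A` to that of the reindexed `B`.
  let S₀ : Matrix V V ℝ := T * star (U : Matrix V V ℝ)
  have hS₀ : S₀.transpose = U * star (T : Matrix V V ℝ) := by
    simp [S₀, Matrix.star_eq_conjTranspose]
  have hs1 : S₀.transpose * S₀ = 1 := by
    rw [hS₀]
    calc (U : Matrix V V ℝ) * star (T : Matrix V V ℝ) * (T * star (U : Matrix V V ℝ))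
        = U * (star (T : Matrix V V ℝ) * T) * star (U : Matrix V V ℝ) := by noncomm_ring
      _ = 1 := by rw [hT, mul_one, hU]
  have hs2 : S₀.transpose * Matrix.reindex e e B * S₀ = A := by
    rw [hS₀, h2]
    calc (U : Matrix V V ℝ) * star (T : Matrix V V ℝ) * (T * D * star (T : Matrix V V ℝ))
          * (T * star (U : Matrix V V ℝ))
        = U * (star (T : Matrix V V ℝ) * T) * D * (star (T : Matrix V V ℝ) * T)
          * star (U : Matrix V V ℝ) := by noncomm_ring
      _ = A := by rw [hT, mul_one, mul_one]; exact h1.symm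
  refine ⟨S₀.submatrix e id, ?_, ?_⟩
  · rw [← hs1, Matrix.transpose_submatrix, Matrix.submatrix_mul_equiv, Matrix.submatrix_id_id]
  · have : B = (Matrix.reindex e e B).submatrix e e := by ext; simp
    rw [this, Matrix.transpose_submatrix, Matrix.submatrix_mul_equiv,
      Matrix.submatrix_mul_equiv, Matrix.submatrix_id_id, hs2]

open Classical in
/-- If `G` is cospectral to `H` and `F` is an induced subgraph of `G`, then `ℝ^K` embeds
isometrically into `ℝ^W` in such a way that the adjacency form of `H` restricts to that of `F`.
This is the interlacing principle in the form used below. -/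
lemma exists_isometry {K V W : Type} [Fintype K] [Fintype V] [Fintype W]
    [DecidableEq V] [DecidableEq W]
    {H : SimpleGraph W} {G : SimpleGraph V} (h : Cospectral H G) {F : SimpleGraph K}
    (f : F ↪g G) :
    ∃ Q : (K → ℝ) →ₗ[ℝ] (W → ℝ), (∀ z, Q z ⬝ᵥ Q z = z ⬝ᵥ z) ∧
      ∀ z, Q z ⬝ᵥ (H.adjMatrix ℝ).mulVec (Q z) = z ⬝ᵥ (F.adjMatrix ℝ).mulVec z := by
  obtain ⟨S, hS1, hS2⟩ := exists_orthogonal_of_charpoly_eq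
    (A := G.adjMatrix ℝ) (B := H.adjMatrix ℝ)
    (by simp [Matrix.IsHermitian, Matrix.conjTranspose_eq_transpose_of_trivial])
    (by simp [Matrix.IsHermitian, Matrix.conjTranspose_eq_transpose_of_trivial])
    (by
      have h' : charPoly G = charPoly H := h.symm
      unfold charPoly at h'
      convert h')
  let P := S.submatrix id f
  have hP1 : P.transpose * P = 1 := by
    have : P.transpose * P = (S.transpose * S).submatrix f f := by
      ext; simp [P, Matrix.mul_apply]
    rw [this, hS1, Matrix.submatrix_one _ f.injective]
  have hP2 : P.transpose * H.adjMatrix ℝ * P = F.adjMatrix ℝ := by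
    have : P.transpose * H.adjMatrix ℝ * P
        = (S.transpose * H.adjMatrix ℝ * S).submatrix f f := by
      ext; simp only [P, Matrix.mul_apply, Matrix.submatrix_apply, Matrix.transpose_apply, id]
    rw [this, hS2]
    ext i j
    simp [SimpleGraph.adjMatrix_apply]
  refine ⟨P.mulVecLin, fun z => ?_, fun z => ?_⟩
  · rw [Matrix.mulVecLin_apply, Matrix.dotProduct_mulVec, ← Matrix.mulVec_transpose,
      Matrix.mulVec_mulVec, hP1, Matrix.one_mulVec]
  · rw [Matrix.mulVecLin_apply, dotProduct_comm, Matrix.dotProduct_mulVec,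
      ← Matrix.mulVec_transpose, Matrix.mulVec_mulVec, Matrix.mulVec_mulVec, hP2,
      dotProduct_comm]

lemma exists_ne_zero_map_eq_zero {m : ℕ}
    (L : (Fin (m + 1) → ℝ) →ₗ[ℝ] (Fin m → ℝ)) : ∃ c ≠ 0, L c = 0 := by
  have := LinearMap.ker_ne_bot_of_finrank_lt (f := L) (by simp)
  obtain ⟨c, hc, h0⟩ := Submodule.exists_mem_ne_zero_of_ne_bot this
  exact ⟨c, h0, hc⟩

open Classical in
lemma doubleStar_form (n : ℕ) (y : Option (Fin 1) ⊕ Option (Fin n) → ℝ) :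
    y ⬝ᵥ ((doubleStar 1 n).adjMatrix ℝ).mulVec y
      = 2 * (y (.inl (some 0)) * y (.inl none) + y (.inl none) * y (.inr none)
        + y (.inr none) * ∑ i, y (.inr (some i))) := by
  simp [dotProduct, Matrix.mulVec, Fintype.sum_sum_type, Fintype.sum_option, doubleStar,
    SimpleGraph.adjMatrix_apply, Finset.mul_sum]
  rw [← Finset.mul_sum, ← Finset.sum_mul]
  ring

lemma doubleStar_norm (n : ℕ) (y : Option (Fin 1) ⊕ Option (Fin n) → ℝ) :
    y ⬝ᵥ y = y (.inl none) ^ 2 + y (.inl (some 0)) ^ 2 + y (.inr none) ^ 2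
      + ∑ i, y (.inr (some i)) ^ 2 := by
  simp [dotProduct, Fintype.sum_sum_type, Fintype.sum_option, ← pow_two]
  ring

open Classical in
/-- On the hyperplane `x_u + n x_v = 0`, where `u` and `v` are the centers carrying `1` and `n`
leaves, the adjacency form of `P₂(1,n)` is strictly below the squared norm away from `0`. Hence
the second largest eigenvalue of `P₂(1,n)` is less than `1`. -/
lemma doubleStar_dotProduct_eq_zero (n : ℕ) (hn : 1 ≤ n) (y : Option (Fin 1) ⊕ Option (Fin n) → ℝ)
    (h0 : y (.inl none) + n * y (.inr none) = 0)
    (hle : y ⬝ᵥ y ≤ y ⬝ᵥ ((doubleStar 1 n).adjMatrix ℝ).mulVec y) : y ⬝ᵥ y = 0 := by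
  rw [doubleStar_norm, doubleStar_form] at *
  have hn' : (1 : ℝ) ≤ n := by exact_mod_cast hn
  generalize y (.inl none) = u at *
  generalize y (.inl (some 0)) = l at *
  generalize y (.inr none) = v at *
  have hu : u = -(n * v) := by linarith
  have hsq : ∑ i, (y (.inr (some i)) - v) ^ 2 = ∑ i, y (.inr (some i)) ^ 2
      - 2 * v * ∑ i, y (.inr (some i)) + n * v ^ 2 := by
    simp [sub_sq, Finset.sum_add_distrib, Finset.sum_sub_distrib, Finset.mul_sum]
    exact Finset.sum_congr rfl fun i _ => by ring
  have hnn : 0 ≤ ∑ i, (y (.inr (some i)) - v) ^ 2 := Finset.sum_nonneg fun i _ => sq_nonneg _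
  -- On the hyperplane, norm minus form is exactly this sum of squares.
  have key : (l - u) ^ 2 + ∑ i, (y (.inr (some i)) - v) ^ 2 + (n + 1) * v ^ 2 ≤ 0 := by
    rw [hsq]; subst hu; nlinarith
  have hv : v = 0 := by
    by_contra hv
    have : 0 < v ^ 2 := by positivity
    nlinarith [sq_nonneg (l - u)]
  subst hv
  have hu0 : u = 0 := by simpa using hu
  subst hu0
  simp at *
  nlinarith [sq_nonneg l]

/-- An induced subgraph `F` of a graph cospectral to `P₂(1,n)` admits no plane, spanned by `p` and
`q`, on which its adjacency form dominates the squared norm: the image of the plane would meet the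
hyperplane of `doubleStar_dotProduct_eq_zero`. The hypothesis `hpos` expresses that `p` and `q`
are linearly independent. -/
lemma no_two_dim {K V : Type} [Fintype K] [Fintype V] [DecidableEq V] (n : ℕ) (hn : 1 ≤ n)
    {G : SimpleGraph V} (h : Cospectral (doubleStar 1 n) G) {F : SimpleGraph K} (f : F ↪g G)
    [DecidableRel F.Adj]
    (p q : K → ℝ) (hle : ∀ a b : ℝ, (a • p + b • q) ⬝ᵥ (a • p + b • q)
      ≤ (a • p + b • q) ⬝ᵥ (F.adjMatrix ℝ).mulVec (a • p + b • q))
    (hpos : ∀ a b : ℝ, (a • p + b • q) ⬝ᵥ (a • p + b • q) = 0 → a = 0 ∧ b = 0) : False := by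
  classical
  obtain ⟨Q, hQ1, hQ2⟩ := exists_isometry h f
  let Z : (Fin 2 → ℝ) →ₗ[ℝ] (K → ℝ) :=
    (LinearMap.proj 0).smulRight p + (LinearMap.proj 1).smulRight q
  let L : (Option (Fin 1) ⊕ Option (Fin n) → ℝ) →ₗ[ℝ] (Fin 1 → ℝ) :=
    LinearMap.pi fun _ => LinearMap.proj (.inl none) + (n : ℝ) • LinearMap.proj (.inr none)
  obtain ⟨c, hc, hL⟩ := exists_ne_zero_map_eq_zero (L ∘ₗ Q ∘ₗ Z)
  have hZ : Z c = c 0 • p + c 1 • q := rfl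
  have hlin : Q (Z c) (.inl none) + n * Q (Z c) (.inr none) = 0 := congrFun hL 0
  have h0 : Q (Z c) ⬝ᵥ Q (Z c) = 0 := by
    apply doubleStar_dotProduct_eq_zero n hn _ hlin
    rw [hQ1, hQ2, hZ]
    convert hle (c 0) (c 1)
  rw [hQ1, hZ] at h0
  obtain ⟨h1, h2⟩ := hpos _ _ h0
  exact hc (by ext i; fin_cases i <;> simpa)

/-- An induced subgraph of a graph cospectral to `P₂(1,n)` admits no three-dimensional space on
which its adjacency form is anisotropic: the form of `P₂(1,n)` vanishes on the subspace of
codimension two where both center coordinates are zero. -/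
lemma no_three_dim {K V : Type} [Fintype K] [Fintype V] [DecidableEq V] (n : ℕ)
    {G : SimpleGraph V} (h : Cospectral (doubleStar 1 n) G) {F : SimpleGraph K} (f : F ↪g G)
    [DecidableRel F.Adj]
    (Z : (Fin 3 → ℝ) →ₗ[ℝ] (K → ℝ))
    (hpos : ∀ c, Z c ⬝ᵥ (F.adjMatrix ℝ).mulVec (Z c) = 0 → c = 0) : False := by
  classical
  obtain ⟨Q, hQ1, hQ2⟩ := exists_isometry h f
  let L : (Option (Fin 1) ⊕ Option (Fin n) → ℝ) →ₗ[ℝ] (Fin 2 → ℝ) :=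
    LinearMap.pi ![LinearMap.proj (.inl none), LinearMap.proj (.inr none)]
  obtain ⟨c, hc, hL⟩ := exists_ne_zero_map_eq_zero (L ∘ₗ Q ∘ₗ Z)
  have hu : Q (Z c) (.inl none) = 0 := congrFun hL 0
  have hv : Q (Z c) (.inr none) = 0 := congrFun hL 1
  apply hc
  apply hpos
  have := hQ2 (Z c)
  rw [doubleStar_form, hu, hv] at this
  simp only [mul_zero, zero_mul, add_zero] at this
  rw [this]
  congr!

open Classical in
lemma graphR_form (z : Fin 6 → ℝ) :
    z ⬝ᵥ (graphR.adjMatrix ℝ).mulVec z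
      = 2 * (z 0 * z 1 + z 1 * z 2 + z 2 * z 3 + z 3 * z 0 + z 0 * z 4 + z 1 * z 5) := by
  simp only [dotProduct, Matrix.mulVec, Fin.sum_univ_six, SimpleGraph.adjMatrix_apply]
  simp [graphR]
  ring

/-- any graph cospectral to `P₂(1,n)` (`n ≥ 1`) has no induced subgraph
isomorphic to `2K₂`, to `R`, or to `P₂(2,2)`. -/
theorem cospectral_doubleStar_forbidden_subgraphs (n : ℕ) (hn : 1 ≤ n)
    {V : Type} [Fintype V] [DecidableEq V] (G : SimpleGraph V)
    (h : Cospectral (doubleStar 1 n) G) :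
    ¬ Nonempty (((⊤ : SimpleGraph (Fin 2)) ⊕g (⊤ : SimpleGraph (Fin 2))) ↪g G) ∧
    ¬ Nonempty (graphR ↪g G) ∧
    ¬ Nonempty (doubleStar 2 2 ↪g G) := by
  classical
  refine ⟨?_, ?_, ?_⟩
  · rintro ⟨f⟩
    -- The indicators of the two edges are eigenvectors for the eigenvalue `1`.
    apply no_two_dim n hn h f (Sum.elim 1 0) (Sum.elim 0 1)
    · intro a b
      simp [dotProduct, Matrix.mulVec, SimpleGraph.adjMatrix_apply, Fintype.sum_sum_type,
        Fin.sum_univ_two]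
      linarith
    · intro a b h0
      simp [dotProduct, Fintype.sum_sum_type] at h0
      constructor <;> nlinarith [mul_self_nonneg a, mul_self_nonneg b]
  · rintro ⟨f⟩
    -- The parameters `a, b, c` are the values at the bipartition class `0, 2, 5`; the values
    -- `c, b - c, a - b` at `1, 3, 4` solve the biadjacency system, so that the form becomes
    -- `2 (a² + b² + c²)`.
    apply no_three_dim n h f (Matrix.mulVecLin
      !![1, 0, 0; 0, 0, 1; 0, 1, 0; 0, 1, -1; 1, -1, 0; 0, 0, 1])
    intro c h0
    rw [graphR_form] at h0
    simp [Matrix.mulVec, dotProduct, Fin.sum_univ_three] at h0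
    have h1 : c 0 ^ 2 + c 1 ^ 2 + c 2 ^ 2 = 0 := by linarith
    ext i
    fin_cases i <;> simp <;> nlinarith [sq_nonneg (c 0), sq_nonneg (c 1), sq_nonneg (c 2)]
  · rintro ⟨f⟩
    -- Eigenvectors of `P₂(2,2)` for the eigenvalues `2` and `1`.
    apply no_two_dim n hn h f
      (Sum.elim (fun o => o.elim 2 1) (fun o => o.elim 2 1))
      (Sum.elim 1 (-1))
    · intro a b
      simp [dotProduct, Matrix.mulVec, SimpleGraph.adjMatrix_apply, Fintype.sum_sum_type,
        Fin.sum_univ_two, Fintype.sum_option, doubleStar]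
      nlinarith [sq_nonneg a]
    · intro a b h0
      simp [dotProduct, Fintype.sum_sum_type, Fintype.sum_option] at h0
      constructor <;> nlinarith [mul_self_nonneg a, mul_self_nonneg b]
end

section
/- If H is a connected bipartite finite simple graph that has no induced subgraph isomorphic to 2K_2 and no induced subgraph isomorphic to R, then H has no induced subgraph isomorphic to P_4 + K_1 (the disjoint union of a path on 4 vertices and one isolated vertex). -/
/-!
Let `a - b - c - d` be an induced path and `v` a vertex isolated from it.  By connectedness `v` has
a neighbour `u`, which lies off the path.  Comparing the edge `u v` with the edges `a b`, `b c` and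
`c d`, the absence of an induced `2K₂` forces `u` to meet each of these edges.  By bipartiteness the
neighbours of `u` on the path all lie in one of `{a, c}`, `{b, d}`, hence they form exactly one of
these sets.  If it is `{b, d}`, then `u - b - c - d - u` is a 4-cycle with pendants `v` at `u` and
`a` at `b`, i.e. an induced `R`; the other case is this one for the reversed path.
-/

open Polynomial SimpleGraph

lemma not_induced_two_edges {V : Type} {H : SimpleGraph V}
    (h2K2 : ¬ Nonempty (((⊤ : SimpleGraph (Fin 2)) ⊕g (⊤ : SimpleGraph (Fin 2))) ↪g H))
    {p q r s : V} (hpq : H.Adj p q) (hrs : H.Adj r s) (hpr : ¬ H.Adj p r) (hps : ¬ H.Adj p s)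
    (hqr : ¬ H.Adj q r) (hqs : ¬ H.Adj q s) : False := by
  apply h2K2
  have hpq' := hpq.symm
  have hrs' := hrs.symm
  have hrp := mt SimpleGraph.Adj.symm hpr
  have hsp := mt SimpleGraph.Adj.symm hps
  have hrq := mt SimpleGraph.Adj.symm hqr
  have hsq := mt SimpleGraph.Adj.symm hqs
  refine ⟨⟨⟨Sum.elim ![p, q] ![r, s], ?_⟩, ?_⟩⟩
  · rintro (i | i) (j | j) h <;> fin_cases i <;> fin_cases j <;> simp at h ⊢ <;> subst h <;>
      simp_all
  · rintro (i | i) (j | j) <;> fin_cases i <;> fin_cases j <;> simp <;> assumption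

/-- Vertices of `R` have pairwise distinct neighbourhoods, so a map preserving and reflecting
adjacency is automatically injective. -/
lemma graphR_twin_free : ∀ i j : Fin 6, (∀ k, graphR.Adj i k ↔ graphR.Adj j k) → i = j := by
  simp only [graphR, SimpleGraph.fromRel_adj]
  intro i j h
  have h0 := h 0; have h1 := h 1; have h2 := h 2; have h3 := h 3; have h4 := h 4; have h5 := h 5
  fin_cases i <;> fin_cases j <;> simp at h0 h1 h2 h3 h4 h5 ⊢

/-- The case where the neighbour `u` of the isolated vertex `v` is adjacent to the inner vertex `b`
of the path `a - b - c - d`. -/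
lemma false_of_adj_inner {V : Type} {H : SimpleGraph V} (C : H.Coloring (Fin 2))
    (h2K2 : ¬ Nonempty (((⊤ : SimpleGraph (Fin 2)) ⊕g (⊤ : SimpleGraph (Fin 2))) ↪g H))
    (hR : ¬ Nonempty (graphR ↪g H)) {a b c d v u : V}
    (hab : H.Adj a b) (hbc : H.Adj b c) (hcd : H.Adj c d)
    (hva : ¬ H.Adj v a) (hvb : ¬ H.Adj v b) (hvc : ¬ H.Adj v c) (hvd : ¬ H.Adj v d)
    (had : ¬ H.Adj a d) (hvu : H.Adj v u) (hub : H.Adj u b) : False := by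
  have cab := C.valid hab
  have cbc := C.valid hbc
  have ccd := C.valid hcd
  have cub := C.valid hub
  have same : ∀ x y, C x = C y → ¬ H.Adj x y := fun x y h h' => C.valid h' h
  have hua : ¬ H.Adj u a := same _ _ (by omega)
  have huc : ¬ H.Adj u c := same _ _ (by omega)
  have hac : ¬ H.Adj a c := same _ _ (by omega)
  have hbd : ¬ H.Adj b d := same _ _ (by omega)
  have hud : H.Adj u d := by
    by_contra hud
    exact not_induced_two_edges h2K2 hvu hcd hvc hvd huc hud
  apply hR
  have key : ∀ i j : Fin 6, H.Adj (![u, b, c, d, v, a] i) (![u, b, c, d, v, a] j) ↔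
      graphR.Adj i j := by
    intro i j
    fin_cases i <;> fin_cases j <;> simp [graphR, H.adj_comm] <;> grind [SimpleGraph.adj_comm]
  refine ⟨⟨⟨![u, b, c, d, v, a], ?_⟩, fun {i j} => key i j⟩⟩
  intro i j h
  exact graphR_twin_free i j fun k => by rw [← key i k, ← key j k, h]

/-- a connected bipartite graph with no induced `2K₂` and no induced `R` has
no induced subgraph isomorphic to `P₄ + K₁`. -/
theorem connected_bipartite_2K2_R_free (V : Type) [Fintype V] (H : SimpleGraph V)
    (hconn : H.Connected) (hbip : H.Colorable 2)
    (h2K2 : ¬ Nonempty (((⊤ : SimpleGraph (Fin 2)) ⊕g (⊤ : SimpleGraph (Fin 2))) ↪g H))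
    (hR : ¬ Nonempty (graphR ↪g H)) :
    ¬ Nonempty ((SimpleGraph.pathGraph 4 ⊕g (⊥ : SimpleGraph (Fin 1))) ↪g H) := by
  rintro ⟨f⟩
  obtain ⟨C⟩ := hbip
  have hp : ∀ i j : Fin 4, H.Adj (f (.inl i)) (f (.inl j)) ↔ (SimpleGraph.pathGraph 4).Adj i j :=
    fun i j => f.map_adj_iff
  have hv : ∀ i : Fin 4, ¬ H.Adj (f (.inr 0)) (f (.inl i)) := fun i h => by
    simpa using f.map_adj_iff.1 h
  have hab := (hp 0 1).2 (by simp [SimpleGraph.pathGraph_adj])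
  have hbc := (hp 1 2).2 (by simp [SimpleGraph.pathGraph_adj])
  have hcd := (hp 2 3).2 (by simp [SimpleGraph.pathGraph_adj])
  have had : ¬ H.Adj (f (.inl 0)) (f (.inl 3)) := by
    rw [hp]; simp [SimpleGraph.pathGraph_adj]
  have : Nontrivial V := ⟨_, _, hab.ne⟩
  obtain ⟨u, hvu⟩ := hconn.preconnected.exists_adj_of_nontrivial (f (.inr 0))
  by_cases hub : H.Adj u (f (.inl 1))
  · exact false_of_adj_inner C h2K2 hR hab hbc hcd (hv 0) (hv 1) (hv 2) (hv 3) had hvu hub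
  by_cases huc : H.Adj u (f (.inl 2))
  · exact false_of_adj_inner C h2K2 hR hcd.symm hbc.symm hab.symm (hv 3) (hv 2) (hv 1) (hv 0)
      (fun h => had h.symm) hvu huc
  exact not_induced_two_edges h2K2 hvu hbc (hv 1) (hv 2) hub huc
end

section
/- Let n ≥ 3 and let G be a finite simple graph cospectral to the double star P_2(1,n). Then the set of nonisolated vertices of G can be partitioned into four pairwise disjoint nonempty sets A, B, C, D such that each of A, B, C, D is an independent set in G, and the induced subgraphs G[A ∪ B], G[B ∪ C], and G[C ∪ D] are complete bipartite graphs with bipartitions (A,B), (B,C), and (C,D) respectively (i.e., within each of these induced subgraphs every vertex of the first part is adjacent to every vertex of the second part, and there are no other edges). -/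
/-!
Cospectral symmetric real matrices have the same rank and the same traces of powers.  The double
star `P₂(1,n)` is the blow-up of a path on four vertices with class sizes `1, 1, 1, n`, so for a
graph `G` cospectral to it, with adjacency matrix `M`: `rank M ≤ 4`, `tr M² = 2(n+2)`,
`tr M³ = 0` (hence `G` is triangle-free) and `tr M⁴ = 2(n+2)² - 4n` (`spectral_data`).

Since `rank M ≤ 4`, all `5 × 5` minors vanish.  The adjacency matrices of `2K₂` and of the path
`P₄` are invertible, so the neighbourhoods of the vertices in one induced copy of either of them
determine all adjacencies of `G` (`adj_of_twoEdges`, `adj_of_path`).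

* If `G` has an induced `2K₂`, triangle-freeness forces `G` (up to isolated vertices) to be a
  blow-up of a path on five vertices with class sizes `t₀, …, t₄`, where only `t₂` may vanish.
  The trace identities then say that the number of edges
  `t₀t₁ + t₁t₂ + t₂t₃ + t₃t₄` is `n + 2` and that
  `t₀t₁t₂t₃ + t₀t₁t₃t₄ + t₁t₂t₃t₄`, the coefficient of degree four less than the order in the
  characteristic polynomial, is `n`.  This is impossible (`blowup_absurd`, `no_twoEdges`).
* If `G` has neither an induced `2K₂` nor an induced `P₄`, it is complete bipartite up to isolated
  vertices and the latter coefficient is `0`, not `n` (`exists_path`).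
* So `G` has an induced path `a - b - c - d` and no induced `2K₂`.  The only possible
  neighbourhoods in this path are then `∅` (isolated vertices) and `{b}`, `{a, c}`, `{b, d}`, `{c}`,
  and the last four types are the parts `A`, `B`, `C`, `D`.
-/

open Polynomial SimpleGraph

/-! ### Spectral invariants of a symmetric matrix -/

lemma trace_pow_eq_sum_roots {V : Type} [Fintype V] [DecidableEq V] {A : Matrix V V ℝ}
    (hA : A.IsHermitian) (k : ℕ) :
    (A ^ k).trace = (A.charpoly.roots.map (· ^ k)).sum := by
  rw [hA.roots_charpoly_eq_eigenvalues, Multiset.map_map]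
  conv_lhs => rw [hA.spectral_theorem, ← map_pow, Unitary.conjStarAlgAut_apply,
    Matrix.trace_mul_cycle]
  simp [Matrix.diagonal_pow, Matrix.trace_diagonal]

lemma rank_eq_card_roots {V : Type} [Fintype V] [DecidableEq V] {A : Matrix V V ℝ}
    (hA : A.IsHermitian) :
    A.rank = (A.charpoly.roots.filter (· ≠ 0)).card := by
  rw [hA.roots_charpoly_eq_eigenvalues, hA.rank_eq_card_non_zero_eigs, Multiset.filter_map,
    Multiset.card_map, Fintype.card_subtype]
  rfl

/-! ### Closed walks in blow-ups of a path -/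

/-- The adjacency matrix of the path `0 - 1 - 2 - 3 - 4` together with the isolated vertex `5`. -/
def pathMat : Matrix (Fin 6) (Fin 6) ℝ :=
  !![0, 1, 0, 0, 0, 0;
     1, 0, 1, 0, 0, 0;
     0, 1, 0, 1, 0, 0;
     0, 0, 1, 0, 1, 0;
     0, 0, 0, 1, 0, 0;
     0, 0, 0, 0, 0, 0]

/-- The size of the fibre of `f` over `i`, as a real number. -/
noncomputable def fib {V : Type} [Fintype V] (f : V → Fin 6) (i : Fin 6) : ℝ :=
  ((Finset.univ.filter fun x => f x = i).card : ℝ)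

lemma sum_comp_fib {V : Type} [Fintype V] (f : V → Fin 6) (g : Fin 6 → ℝ) :
    ∑ x, g (f x) = ∑ i, fib f i * g i := by
  rw [← Finset.sum_fiberwise Finset.univ f]
  refine Finset.sum_congr rfl fun i _ => ?_
  rw [Finset.sum_congr rfl (g := fun _ => g i) (by simp +contextual)]
  simp [fib]

/-- The matrix product `M * diag t * N`, written as an explicit sum. -/
def wmul (t : Fin 6 → ℝ) (M N : Matrix (Fin 6) (Fin 6) ℝ) : Matrix (Fin 6) (Fin 6) ℝ :=
  fun i j => ∑ k, t k * (M i k * N k j)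

/-- The product of blow-ups along `f` is a blow-up, with fibre sizes as weights. -/
lemma blowup_mul {V : Type} [Fintype V] (f : V → Fin 6) (M N : Matrix (Fin 6) (Fin 6) ℝ) :
    M.submatrix f f * N.submatrix f f =
      (wmul (fib f) M N).submatrix f f := by
  ext x y
  simp only [Matrix.mul_apply, Matrix.submatrix_apply]
  exact sum_comp_fib f fun i => M (f x) i * N i (f y)

lemma blowup_trace {V : Type} [Fintype V] (f : V → Fin 6) (M : Matrix (Fin 6) (Fin 6) ℝ) :
    (M.submatrix f f).trace = ∑ i, fib f i * M i i := by
  simp only [Matrix.trace, Matrix.diag, Matrix.submatrix_apply]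
  exact sum_comp_fib f fun i => M i i

/-- The matrix of weighted two-step walks on the path. -/
lemma path_sq (t : Fin 6 → ℝ) : wmul t pathMat pathMat =
  !![t 1, 0, t 1, 0, 0, 0;
     0, t 0 + t 2, 0, t 2, 0, 0;
     t 1, 0, t 1 + t 3, 0, t 3, 0;
     0, t 2, 0, t 2 + t 4, 0, 0;
     0, 0, t 3, 0, t 3, 0;
     0, 0, 0, 0, 0, 0] := by
  ext i j
  fin_cases i <;> fin_cases j <;>
    simp [pathMat, wmul, Fin.sum_univ_succ]

lemma blowup_trace_two {V : Type} [Fintype V] [DecidableEq V] (f : V → Fin 6) :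
    ((pathMat.submatrix f f) ^ 2).trace =
      2 * (fib f 0 * fib f 1 + fib f 1 * fib f 2 + fib f 2 * fib f 3 + fib f 3 * fib f 4) := by
  rw [pow_two, blowup_mul, blowup_trace, path_sq]
  simp [Fin.sum_univ_succ]
  ring

lemma blowup_trace_three {V : Type} [Fintype V] [DecidableEq V] (f : V → Fin 6) :
    ((pathMat.submatrix f f) ^ 3).trace = 0 := by
  rw [pow_succ, pow_two, blowup_mul, blowup_mul, blowup_trace, path_sq]
  simp [Fin.sum_univ_succ, wmul, pathMat]

lemma blowup_trace_four {V : Type} [Fintype V] [DecidableEq V] (f : V → Fin 6) :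
    ((pathMat.submatrix f f) ^ 4).trace =
      2 * (fib f 0 * fib f 1 + fib f 1 * fib f 2 + fib f 2 * fib f 3 + fib f 3 * fib f 4) ^ 2
      - 4 * (fib f 0 * fib f 1 * fib f 2 * fib f 3 + fib f 0 * fib f 1 * fib f 3 * fib f 4
        + fib f 1 * fib f 2 * fib f 3 * fib f 4) := by
  rw [show 4 = 2 * 2 from rfl, pow_mul, pow_two, pow_two, blowup_mul, blowup_mul, blowup_trace,
    path_sq]
  simp [Fin.sum_univ_succ, wmul]
  ring

/-! ### Invariants of the double star -/

/-- The map exhibiting `P₂(1,n)` as a blow-up of the path on four vertices. -/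
def doubleStarMap (n : ℕ) : Option (Fin 1) ⊕ Option (Fin n) → Fin 4
  | Sum.inl (some _) => 0
  | Sum.inl none => 1
  | Sum.inr none => 2
  | Sum.inr (some _) => 3

lemma doubleStar_adjMatrix (n : ℕ) [DecidableRel (doubleStar 1 n).Adj] :
    (doubleStar 1 n).adjMatrix ℝ =
      (pathMat.submatrix (Fin.castLE (by norm_num)) (Fin.castLE (by norm_num))).submatrix
        (doubleStarMap n) (doubleStarMap n) := by
  ext x y
  rcases x with (_ | x) | (_ | x) <;> rcases y with (_ | y) | (_ | y) <;>
    rw [adjMatrix_apply] <;>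
      simp [doubleStar, doubleStarMap, pathMat, eq_iff_true_of_subsingleton]

lemma doubleStar_fib (n : ℕ) (i : Fin 6) :
    fib (fun x => Fin.castLE (by norm_num : 4 ≤ 6) (doubleStarMap n x)) i =
      ![1, 1, 1, (n : ℝ), 0, 0] i := by
  have h := sum_comp_fib (fun x => Fin.castLE (by norm_num : 4 ≤ 6) (doubleStarMap n x))
    (fun j => if j = i then 1 else 0)
  rw [show ∑ j, fib (fun x => Fin.castLE (by norm_num : 4 ≤ 6) (doubleStarMap n x)) j *
    (if j = i then 1 else 0) = fib (fun x => Fin.castLE (by norm_num : 4 ≤ 6) (doubleStarMap n x)) i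
    by simp] at h
  rw [← h]
  fin_cases i <;> simp [Fintype.sum_sum_type, Fintype.sum_option, doubleStarMap]

/-- The consequences of cospectrality with `P₂(1,n)` used below: the rank
bound and the numbers of closed walks of lengths two, three and four. -/
lemma spectral_data (n : ℕ) {V : Type} [Fintype V] [DecidableEq V] (G : SimpleGraph V)
    [DecidableRel G.Adj] (h : Cospectral (doubleStar 1 n) G) :
    (G.adjMatrix ℝ).rank ≤ 4 ∧ (G.adjMatrix ℝ ^ 2).trace = 2 * (n + 2) ∧
      (G.adjMatrix ℝ ^ 3).trace = 0 ∧
      (G.adjMatrix ℝ ^ 4).trace = 2 * (n + 2) ^ 2 - 4 * n := by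
  classical
  have h' : ((doubleStar 1 n).adjMatrix ℝ).charpoly = (G.adjMatrix ℝ).charpoly := by
    unfold Cospectral charPoly at h
    convert h
  have hG : (G.adjMatrix ℝ).IsHermitian := by
    simp [Matrix.IsHermitian, Matrix.conjTranspose_eq_transpose_of_trivial]
  have hD : ((doubleStar 1 n).adjMatrix ℝ).IsHermitian := by
    simp [Matrix.IsHermitian, Matrix.conjTranspose_eq_transpose_of_trivial]
  have ht : ∀ k, (G.adjMatrix ℝ ^ k).trace = ((doubleStar 1 n).adjMatrix ℝ ^ k).trace := fun k => by
    rw [trace_pow_eq_sum_roots hG, trace_pow_eq_sum_roots hD, h']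
  have hr : (G.adjMatrix ℝ).rank = ((doubleStar 1 n).adjMatrix ℝ).rank := by
    rw [rank_eq_card_roots hG, rank_eq_card_roots hD, h']
  refine ⟨?_, ?_, ?_, ?_⟩
  · rw [hr, doubleStar_adjMatrix]
    refine (Matrix.rank_submatrix_le _ _ _).trans ?_
    simpa using Matrix.rank_le_card_width
      (pathMat.submatrix (Fin.castLE (by norm_num : 4 ≤ 6)) (Fin.castLE (by norm_num : 4 ≤ 6)))
  · rw [ht, doubleStar_adjMatrix, Matrix.submatrix_submatrix]
    erw [blowup_trace_two]
    simp only [Function.comp_def, doubleStar_fib]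
    simp
    ring
  · rw [ht, doubleStar_adjMatrix, Matrix.submatrix_submatrix]
    erw [blowup_trace_three]
  · rw [ht, doubleStar_adjMatrix, Matrix.submatrix_submatrix]
    erw [blowup_trace_four]
    simp only [Function.comp_def, doubleStar_fib]
    simp
    ring

/-! ### Triangles and vanishing minors -/

lemma triangle_free {V : Type} [Fintype V] [DecidableEq V] {G : SimpleGraph V}
    [DecidableRel G.Adj] (h3 : (G.adjMatrix ℝ ^ 3).trace = 0) {x y z : V}
    (hxy : G.Adj x y) (hyz : G.Adj y z) (hxz : G.Adj x z) : False := by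
  have h0 : ∀ u v, 0 ≤ G.adjMatrix ℝ u v := fun u v => by
    rw [adjMatrix_apply]; split_ifs <;> norm_num
  have h20 : ∀ u v, 0 ≤ (G.adjMatrix ℝ ^ 2) u v := fun u v => by
    rw [pow_two, Matrix.mul_apply]
    exact Finset.sum_nonneg fun w _ => mul_nonneg (h0 _ _) (h0 _ _)
  have h30 : ∀ u v w, (G.adjMatrix ℝ ^ 2) u w * G.adjMatrix ℝ w v ≤ (G.adjMatrix ℝ ^ 3) u v :=
    fun u v w => by
      rw [pow_succ _ 2, Matrix.mul_apply]
      exact Finset.single_le_sum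
        (f := fun w => (G.adjMatrix ℝ ^ 2) u w * G.adjMatrix ℝ w v)
        (fun i _ => mul_nonneg (h20 _ _) (h0 _ _)) (Finset.mem_univ w)
  have h21 : 1 ≤ (G.adjMatrix ℝ ^ 2) x z := by
    rw [pow_two, Matrix.mul_apply]
    refine le_trans (by simp [hxy, hyz]) (Finset.single_le_sum
      (f := fun w => G.adjMatrix ℝ x w * G.adjMatrix ℝ w z)
      (fun i _ => mul_nonneg (h0 _ _) (h0 _ _)) (Finset.mem_univ y))
  have h31 : (G.adjMatrix ℝ ^ 3) x x ≤ 0 := by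
    rw [← h3, Matrix.trace]
    exact Finset.single_le_sum (f := fun w => (G.adjMatrix ℝ ^ 3).diag w)
      (fun i _ => le_trans (mul_nonneg (h20 i x) (h0 x i)) (h30 i i x)) (Finset.mem_univ x)
  have := h30 x x z
  rw [adjMatrix_apply G z x, if_pos hxz.symm] at this
  linarith

lemma minor_zero {V : Type} [Fintype V] [DecidableEq V] {A : Matrix V V ℝ} (h : A.rank ≤ 4)
    (r c : Fin 5 → V) : (A.submatrix r c).det = 0 := by
  by_contra hd
  have h1 := Matrix.rank_of_isUnit (A.submatrix r c)
    ((Matrix.isUnit_iff_isUnit_det _).2 (isUnit_iff_ne_zero.2 hd))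
  have h2 := A.rank_submatrix_le r c
  simp at h1
  omega

lemma det_twoEdges (p1 p2 p3 p4 q1 q2 q3 q4 r : ℝ) :
    Matrix.det !![0, 1, 0, 0, p1; 1, 0, 0, 0, p2; 0, 0, 0, 1, p3; 0, 0, 1, 0, p4;
      q1, q2, q3, q4, r] = r - (q1 * p2 + q2 * p1 + q3 * p4 + q4 * p3) := by
  simp [Matrix.det_succ_row_zero, Fin.sum_univ_succ, Fin.succAbove]
  ring

lemma det_path (p1 p2 p3 p4 q1 q2 q3 q4 r : ℝ) :
    Matrix.det !![0, 1, 0, 0, p1; 1, 0, 1, 0, p2; 0, 1, 0, 1, p3; 0, 0, 1, 0, p4;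
      q1, q2, q3, q4, r] =
      r - (q1 * p2 + q2 * p1 - q1 * p4 - q4 * p1 + q3 * p4 + q4 * p3) := by
  simp [Matrix.det_succ_row_zero, Fin.sum_univ_succ, Fin.succAbove]
  ring

/-- In a graph of rank at most four, the neighbourhoods in an induced `2K₂` determine all
adjacencies, through the inverse of the adjacency matrix of `2K₂`. -/
lemma adj_of_twoEdges {V : Type} [Fintype V] [DecidableEq V] {G : SimpleGraph V}
    [DecidableRel G.Adj] (hr : (G.adjMatrix ℝ).rank ≤ 4) {a b c d : V}
    (hab : G.Adj a b) (hcd : G.Adj c d) (hac : ¬ G.Adj a c) (had : ¬ G.Adj a d)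
    (hbc : ¬ G.Adj b c) (hbd : ¬ G.Adj b d) (u v : V) :
    G.adjMatrix ℝ u v =
      G.adjMatrix ℝ u a * G.adjMatrix ℝ v b + G.adjMatrix ℝ u b * G.adjMatrix ℝ v a +
      G.adjMatrix ℝ u c * G.adjMatrix ℝ v d + G.adjMatrix ℝ u d * G.adjMatrix ℝ v c := by
  have h := minor_zero hr ![a, b, c, d, u] ![a, b, c, d, v]
  have e : (G.adjMatrix ℝ).submatrix ![a, b, c, d, u] ![a, b, c, d, v] =
      !![0, 1, 0, 0, G.adjMatrix ℝ v a; 1, 0, 0, 0, G.adjMatrix ℝ v b;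
        0, 0, 0, 1, G.adjMatrix ℝ v c; 0, 0, 1, 0, G.adjMatrix ℝ v d;
        G.adjMatrix ℝ u a, G.adjMatrix ℝ u b, G.adjMatrix ℝ u c, G.adjMatrix ℝ u d,
        G.adjMatrix ℝ u v] := by
    ext i j
    fin_cases i <;> fin_cases j <;>
      simp [adjMatrix_apply, hab, hcd, hac, had, hbc, hbd, hab.symm, hcd.symm,
        G.adj_comm c a, G.adj_comm d a, G.adj_comm c b, G.adj_comm d b, G.adj_comm _ v]
  rw [e, det_twoEdges] at h
  linarith

/-- The analogue of `adj_of_twoEdges` for an induced path on four vertices. -/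
lemma adj_of_path {V : Type} [Fintype V] [DecidableEq V] {G : SimpleGraph V}
    [DecidableRel G.Adj] (hr : (G.adjMatrix ℝ).rank ≤ 4) {a b c d : V}
    (hab : G.Adj a b) (hbc : G.Adj b c) (hcd : G.Adj c d) (hac : ¬ G.Adj a c)
    (had : ¬ G.Adj a d) (hbd : ¬ G.Adj b d) (u v : V) :
    G.adjMatrix ℝ u v =
      G.adjMatrix ℝ u a * G.adjMatrix ℝ v b + G.adjMatrix ℝ u b * G.adjMatrix ℝ v a -
      G.adjMatrix ℝ u a * G.adjMatrix ℝ v d - G.adjMatrix ℝ u d * G.adjMatrix ℝ v a +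
      G.adjMatrix ℝ u c * G.adjMatrix ℝ v d + G.adjMatrix ℝ u d * G.adjMatrix ℝ v c := by
  have h := minor_zero hr ![a, b, c, d, u] ![a, b, c, d, v]
  have e : (G.adjMatrix ℝ).submatrix ![a, b, c, d, u] ![a, b, c, d, v] =
      !![0, 1, 0, 0, G.adjMatrix ℝ v a; 1, 0, 1, 0, G.adjMatrix ℝ v b;
        0, 1, 0, 1, G.adjMatrix ℝ v c; 0, 0, 1, 0, G.adjMatrix ℝ v d;
        G.adjMatrix ℝ u a, G.adjMatrix ℝ u b, G.adjMatrix ℝ u c, G.adjMatrix ℝ u d,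
        G.adjMatrix ℝ u v] := by
    ext i j
    fin_cases i <;> fin_cases j <;>
      simp [adjMatrix_apply, hab, hcd, hac, had, hbc, hbd, hab.symm, hcd.symm, hbc.symm,
        G.adj_comm c a, G.adj_comm d a, G.adj_comm d b, G.adj_comm _ v]
  rw [e, det_path] at h
  linarith

/-! ### Excluding induced `2K₂` -/

/-- The trace identities for a blow-up of the path on five vertices, with class sizes `fib f i`:
the number of edges is `n + 2`, and the quartic coefficient (the second elementary symmetric
function of the squares of the positive eigenvalues) is `n`. -/
lemma blowup_eqs {V : Type} [Fintype V] [DecidableEq V] {A : Matrix V V ℝ} {n : ℕ}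
    (h2 : (A ^ 2).trace = 2 * (n + 2)) (h4 : (A ^ 4).trace = 2 * (n + 2) ^ 2 - 4 * n)
    (f : V → Fin 6) (hA : A = pathMat.submatrix f f) :
    (n + 2 : ℝ) = fib f 0 * fib f 1 + fib f 1 * fib f 2 + fib f 2 * fib f 3 + fib f 3 * fib f 4 ∧
    (n : ℝ) = fib f 0 * fib f 1 * fib f 2 * fib f 3 + fib f 0 * fib f 1 * fib f 3 * fib f 4
        + fib f 1 * fib f 2 * fib f 3 * fib f 4 := by
  rw [hA, blowup_trace_two] at h2
  rw [hA, blowup_trace_four] at h4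
  have h2' : (n + 2 : ℝ) =
      fib f 0 * fib f 1 + fib f 1 * fib f 2 + fib f 2 * fib f 3 + fib f 3 * fib f 4 := by linarith
  refine ⟨h2', ?_⟩
  rw [← h2'] at h4
  linarith

lemma one_le_fib {V : Type} [Fintype V] (f : V → Fin 6) {x : V} {i : Fin 6} (h : f x = i) :
    1 ≤ fib f i := by
  unfold fib
  exact_mod_cast Finset.card_pos.2 ⟨x, by simpa using h⟩

/-- If all classes except possibly the middle one are nonempty, then the quartic coefficient
exceeds the number of edges minus two. -/
lemma blowup_absurd {n t0 t1 t2 t3 t4 : ℝ} (h0 : 1 ≤ t0) (h1 : 1 ≤ t1) (h2 : 0 ≤ t2) (h3 : 1 ≤ t3)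
    (h4 : 1 ≤ t4) (he : n + 2 = t0 * t1 + t1 * t2 + t2 * t3 + t3 * t4)
    (hc : n = t0 * t1 * t2 * t3 + t0 * t1 * t3 * t4 + t1 * t2 * t3 * t4) : False := by
  have hx : 1 ≤ t0 * t1 := by nlinarith
  have hy : 1 ≤ t3 * t4 := by nlinarith
  have e1 : t2 * t3 ≤ t0 * t1 * (t2 * t3) :=
    le_mul_of_one_le_left (mul_nonneg h2 (by linarith)) hx
  have e2 : t1 * t2 ≤ t3 * t4 * (t1 * t2) :=
    le_mul_of_one_le_left (mul_nonneg (by linarith) h2) hy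
  nlinarith [mul_nonneg (sub_nonneg.2 hx) (sub_nonneg.2 hy)]

/-- By triangle-freeness, each vertex sees at most one end of each edge of the induced `2K₂`.  If
among the mixed types, those seeing both edges, only `{a, c}` may occur, then the graph is, up to
isolated vertices, a blow-up of the path `b - a - m - c - d` with `m` of type `{a, c}` (the middle
class may be empty), which contradicts `blowup_absurd`. -/
lemma no_twoEdges_aux {V : Type} [Fintype V] [DecidableEq V] {G : SimpleGraph V}
    [DecidableRel G.Adj] {n : ℕ} (hr : (G.adjMatrix ℝ).rank ≤ 4)
    (h2 : (G.adjMatrix ℝ ^ 2).trace = 2 * (n + 2)) (h3 : (G.adjMatrix ℝ ^ 3).trace = 0)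
    (h4 : (G.adjMatrix ℝ ^ 4).trace = 2 * (n + 2) ^ 2 - 4 * n) {a b c d : V}
    (hab : G.Adj a b) (hcd : G.Adj c d) (hac : ¬ G.Adj a c) (had : ¬ G.Adj a d)
    (hbc : ¬ G.Adj b c) (hbd : ¬ G.Adj b d)
    (n1 : ∀ v, G.Adj v a → ¬ G.Adj v d) (n2 : ∀ v, G.Adj v b → ¬ G.Adj v c)
    (n3 : ∀ v, G.Adj v b → ¬ G.Adj v d) : False := by
  let f : V → Fin 6 := fun v =>
    if G.Adj v a then (if G.Adj v c then 2 else 0) else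
    if G.Adj v b then 1 else if G.Adj v d then 3 else if G.Adj v c then 4 else 5
  have key : ∀ v,
      (f v = 0 ∧ G.Adj v a ∧ ¬ G.Adj v b ∧ ¬ G.Adj v c ∧ ¬ G.Adj v d) ∨
      (f v = 1 ∧ ¬ G.Adj v a ∧ G.Adj v b ∧ ¬ G.Adj v c ∧ ¬ G.Adj v d) ∨
      (f v = 2 ∧ G.Adj v a ∧ ¬ G.Adj v b ∧ G.Adj v c ∧ ¬ G.Adj v d) ∨
      (f v = 3 ∧ ¬ G.Adj v a ∧ ¬ G.Adj v b ∧ ¬ G.Adj v c ∧ G.Adj v d) ∨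
      (f v = 4 ∧ ¬ G.Adj v a ∧ ¬ G.Adj v b ∧ G.Adj v c ∧ ¬ G.Adj v d) ∨
      (f v = 5 ∧ ¬ G.Adj v a ∧ ¬ G.Adj v b ∧ ¬ G.Adj v c ∧ ¬ G.Adj v d) := by
    intro v
    have t1 : G.Adj v a → ¬ G.Adj v b := fun x y => triangle_free h3 x hab y
    have t2 : G.Adj v c → ¬ G.Adj v d := fun x y => triangle_free h3 x hcd y
    have := n1 v
    have := n2 v
    have := n3 v
    by_cases G.Adj v a <;> by_cases G.Adj v b <;> by_cases G.Adj v c <;> by_cases G.Adj v d <;>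
      simp_all [f]
  have hA : G.adjMatrix ℝ = pathMat.submatrix f f := by
    ext u v
    rw [adj_of_twoEdges hr hab hcd hac had hbc hbd u v, Matrix.submatrix_apply]
    rcases key u with ⟨e, p⟩ | ⟨e, p⟩ | ⟨e, p⟩ | ⟨e, p⟩ | ⟨e, p⟩ | ⟨e, p⟩ <;>
    rcases key v with ⟨e', p'⟩ | ⟨e', p'⟩ | ⟨e', p'⟩ | ⟨e', p'⟩ | ⟨e', p'⟩ | ⟨e', p'⟩ <;>
    rw [e, e'] <;> simp [adjMatrix_apply, p, p', pathMat]
  obtain ⟨he, hc⟩ := blowup_eqs h2 h4 f hA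
  refine blowup_absurd (one_le_fib f (x := b) ?_) (one_le_fib f (x := a) ?_)
    (Nat.cast_nonneg _) (one_le_fib f (x := c) ?_) (one_le_fib f (x := d) ?_) he hc
  · simp [f, hab.symm, hbc]
  · simp [f, hab]
  · simp [f, hcd, G.adj_comm c a, G.adj_comm c b, hac, hbc]
  · simp [f, hcd.symm, G.adj_comm d a, G.adj_comm d b, had, hbd]

/-- At most one mixed type with respect to an induced `2K₂` occurs, so that after renaming the
vertices of the `2K₂`, `no_twoEdges_aux` applies. -/
lemma no_twoEdges {V : Type} [Fintype V] [DecidableEq V] {G : SimpleGraph V}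
    [DecidableRel G.Adj] {n : ℕ} (hr : (G.adjMatrix ℝ).rank ≤ 4)
    (h2 : (G.adjMatrix ℝ ^ 2).trace = 2 * (n + 2)) (h3 : (G.adjMatrix ℝ ^ 3).trace = 0)
    (h4 : (G.adjMatrix ℝ ^ 4).trace = 2 * (n + 2) ^ 2 - 4 * n) {a b c d : V}
    (hab : G.Adj a b) (hcd : G.Adj c d) (hac : ¬ G.Adj a c) (had : ¬ G.Adj a d)
    (hbc : ¬ G.Adj b c) (hbd : ¬ G.Adj b d) : False := by
  -- Two vertices of different mixed types are adjacent with a common neighbour (a triangle),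
  -- or would have adjacency entry `2`.
  have cls : ∀ a b c d : V, G.Adj a b → G.Adj c d → ¬ G.Adj a c → ¬ G.Adj a d →
      ¬ G.Adj b c → ¬ G.Adj b d → ∀ m, G.Adj m a → G.Adj m c → False := by
    intro a b c d hab hcd hac had hbc hbd m hma hmc
    have hmb : ¬ G.Adj m b := fun y => triangle_free h3 hma hab y
    have hmd : ¬ G.Adj m d := fun y => triangle_free h3 hmc hcd y
    have F := fun v => adj_of_twoEdges hr hab hcd hac had hbc hbd m v
    refine no_twoEdges_aux hr h2 h3 h4 hab hcd hac had hbc hbd ?_ ?_ ?_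
    · intro v hva hvd
      have hvb : ¬ G.Adj v b := fun y => triangle_free h3 hva hab y
      have hvm : G.Adj m v := by
        by_contra hmv
        have := F v
        simp [adjMatrix_apply, hma, hmb, hmc, hmd, hmv, hva, hvb, hvd] at this
      exact triangle_free h3 hvm hva hma
    · intro v hvb hvc
      have hvd : ¬ G.Adj v d := fun y => triangle_free h3 hvc hcd y
      have hvm : G.Adj m v := by
        by_contra hmv
        have := F v
        simp [adjMatrix_apply, hma, hmb, hmc, hmd, hmv, hvb, hvd] at this
      exact triangle_free h3 hvm hvc hmc
    · intro v hvb hvd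
      have := F v
      simp only [adjMatrix_apply, hma, hmb, hmc, hmd, hvb, hvd] at this
      split_ifs at this <;> norm_num at this
  exact no_twoEdges_aux hr h2 h3 h4 hab hcd hac had hbc hbd
    (cls a b d c hab hcd.symm had hac hbd hbc)
    (cls b a c d hab.symm hcd hbc hbd hac had)
    (cls b a d c hab.symm hcd.symm hbd hbc had hac)

/-! ### Existence of an induced path on four vertices -/

/-- A triangle-free graph with an edge but no induced `2K₂` or four-vertex path is complete
bipartite up to isolated vertices, so its quartic coefficient vanishes. -/
lemma exists_path {V : Type} [Fintype V] [DecidableEq V] {G : SimpleGraph V}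
    [DecidableRel G.Adj] {n : ℕ} (hn : 0 < n) (hr : (G.adjMatrix ℝ).rank ≤ 4)
    (h2 : (G.adjMatrix ℝ ^ 2).trace = 2 * (n + 2)) (h3 : (G.adjMatrix ℝ ^ 3).trace = 0)
    (h4 : (G.adjMatrix ℝ ^ 4).trace = 2 * (n + 2) ^ 2 - 4 * n) :
    ∃ a b c d, G.Adj a b ∧ G.Adj b c ∧ G.Adj c d ∧ ¬ G.Adj a c ∧ ¬ G.Adj a d ∧ ¬ G.Adj b d := by
  by_contra! H
  have hn' : (0 : ℝ) < n := by exact_mod_cast hn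
  obtain ⟨a, b, hab⟩ : ∃ a b, G.Adj a b := by
    by_contra! h
    have : G.adjMatrix ℝ = 0 := by
      ext i j
      simp [adjMatrix_apply, h]
    rw [this] at h2
    simp at h2
    linarith
  let f : V → Fin 6 := fun v => if G.Adj v a then 0 else if G.Adj v b then 1 else 5
  have key : ∀ v,
      (f v = 0 ∧ G.Adj v a ∧ ¬ G.Adj v b) ∨ (f v = 1 ∧ ¬ G.Adj v a ∧ G.Adj v b) ∨
      (f v = 5 ∧ ¬ G.Adj v a ∧ ¬ G.Adj v b) := by
    intro v
    have t1 : G.Adj v a → ¬ G.Adj v b := fun x y => triangle_free h3 x hab y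
    by_cases G.Adj v a <;> by_cases G.Adj v b <;> simp_all [f]
  have hiso : ∀ z w, ¬ G.Adj z a → ¬ G.Adj z b → ¬ G.Adj z w := by
    intro z w hza hzb hzw
    by_cases hwa : G.Adj w a
    · have hwb : ¬ G.Adj w b := fun y => triangle_free h3 hwa hab y
      exact hwb (H z w a b hzw hwa hab hza hzb)
    by_cases hwb : G.Adj w b
    · exact hwa (H z w b a hzw hwb hab.symm hzb hza)
    exact no_twoEdges hr h2 h3 h4 hzw hab hza hzb hwa hwb
  have hcomp : ∀ x y, G.Adj x a → ¬ G.Adj x b → ¬ G.Adj y a → G.Adj y b → G.Adj x y := by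
    intro x y hxa hxb hya hyb
    by_contra hxy
    exact hya (H x a b y hxa hab hyb.symm hxb hxy).symm
  have hA : G.adjMatrix ℝ = pathMat.submatrix f f := by
    ext u v
    rw [adjMatrix_apply, Matrix.submatrix_apply]
    rcases key u with ⟨e, p, p2⟩ | ⟨e, p, p2⟩ | ⟨e, p, p2⟩ <;>
    rcases key v with ⟨e', q, q2⟩ | ⟨e', q, q2⟩ | ⟨e', q, q2⟩ <;> rw [e, e']
    · rw [if_neg fun h => triangle_free h3 h q p]; simp [pathMat]
    · rw [if_pos (hcomp u v p p2 q q2)]; simp [pathMat]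
    · rw [if_neg fun h => hiso v u q q2 h.symm]; simp [pathMat]
    · rw [if_pos (hcomp v u q q2 p p2).symm]; simp [pathMat]
    · rw [if_neg fun h => triangle_free h3 h q2 p2]; simp [pathMat]
    · rw [if_neg fun h => hiso v u q q2 h.symm]; simp [pathMat]
    all_goals rw [if_neg (hiso u v p p2)]; simp [pathMat]
  have hf3 : fib f 3 = 0 := by
    unfold fib
    simp only [Nat.cast_eq_zero, Finset.card_eq_zero, Finset.filter_eq_empty_iff]
    intro v _ hv
    rcases key v with ⟨e, -⟩ | ⟨e, -⟩ | ⟨e, -⟩ <;> rw [e] at hv <;> exact absurd hv (by decide)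
  have := (blowup_eqs h2 h4 f hA).2
  simp [hf3] at this
  omega

/-! ### The partition -/

/-- if `n ≥ 3` and `G` is cospectral to `P₂(1,n)`, then the nonisolated
vertices of `G` partition into nonempty independent sets `A, B, C, D` with the induced
subgraphs on `A ∪ B`, `B ∪ C`, `C ∪ D` complete bipartite with parts `(A,B)`, `(B,C)`,
`(C,D)`. -/
theorem cospectral_doubleStar_structure (n : ℕ) (hn : 3 ≤ n)
    {V : Type} [Fintype V] [DecidableEq V] (G : SimpleGraph V)
    (h : Cospectral (doubleStar 1 n) G) :
    ∃ A B C D : Set V,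
      A.Nonempty ∧ B.Nonempty ∧ C.Nonempty ∧ D.Nonempty ∧
      [A, B, C, D].Pairwise Disjoint ∧
      A ∪ B ∪ C ∪ D = {v : V | ∃ w, G.Adj v w} ∧
      (∀ u ∈ A, ∀ v ∈ A, ¬ G.Adj u v) ∧
      (∀ u ∈ B, ∀ v ∈ B, ¬ G.Adj u v) ∧
      (∀ u ∈ C, ∀ v ∈ C, ¬ G.Adj u v) ∧
      (∀ u ∈ D, ∀ v ∈ D, ¬ G.Adj u v) ∧
      (∀ u ∈ A, ∀ v ∈ B, G.Adj u v) ∧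
      (∀ u ∈ B, ∀ v ∈ C, G.Adj u v) ∧
      (∀ u ∈ C, ∀ v ∈ D, G.Adj u v) := by
  classical
  obtain ⟨hr, h2, h3, h4⟩ := spectral_data n G h
  obtain ⟨a, b, c, d, hab, hbc, hcd, hac, had, hbd⟩ := exists_path (by omega) hr h2 h3 h4
  have F := adj_of_path hr hab hbc hcd hac had hbd
  have hca : ¬ G.Adj c a := fun h => hac h.symm
  have hda : ¬ G.Adj d a := fun h => had h.symm
  have hdb : ¬ G.Adj d b := fun h => hbd h.symm
  -- The possible neighbourhoods in the path `a - b - c - d`.  A vertex of type `{a}` or `{d}`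
  -- would give an induced `2K₂`, and type `{a, d}` is impossible by `F v v`.
  have key : ∀ v,
      (¬ G.Adj v a ∧ G.Adj v b ∧ ¬ G.Adj v c ∧ ¬ G.Adj v d) ∨
      (G.Adj v a ∧ ¬ G.Adj v b ∧ G.Adj v c ∧ ¬ G.Adj v d) ∨
      (¬ G.Adj v a ∧ G.Adj v b ∧ ¬ G.Adj v c ∧ G.Adj v d) ∨
      (¬ G.Adj v a ∧ ¬ G.Adj v b ∧ G.Adj v c ∧ ¬ G.Adj v d) ∨
      (¬ G.Adj v a ∧ ¬ G.Adj v b ∧ ¬ G.Adj v c ∧ ¬ G.Adj v d) := by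
    intro v
    have t1 : G.Adj v a → ¬ G.Adj v b := fun x y => triangle_free h3 x hab y
    have t2 : G.Adj v b → ¬ G.Adj v c := fun x y => triangle_free h3 x hbc y
    have t3 : G.Adj v c → ¬ G.Adj v d := fun x y => triangle_free h3 x hcd y
    have t4 : G.Adj v a → G.Adj v d → False := by
      intro x y
      have := F v v
      have hvc : ¬ G.Adj v c := fun z => t3 z y
      simp [adjMatrix_apply, x, y, t1 x, hvc] at this
      norm_num at this
    have t5 : G.Adj v a → G.Adj v c := by
      intro x
      by_contra y
      exact no_twoEdges hr h2 h3 h4 x hcd y (t4 x) hac had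
    have t6 : G.Adj v d → G.Adj v b := by
      intro x
      by_contra y
      exact no_twoEdges hr h2 h3 h4 x hab (fun z => t4 z x) y hda hdb
    clear F h2 h3 h4 hr hab hbc hcd hac had hbd hca hda hdb h
    by_cases x1 : G.Adj v a <;> by_cases x2 : G.Adj v b <;> by_cases x3 : G.Adj v c <;>
      by_cases x4 : G.Adj v d <;> simp_all only [not_true, not_false_iff, and_true,
        or_true, and_false, imp_false, forall_const, or_self, or_false]
  refine ⟨{v | G.Adj v b ∧ ¬ G.Adj v d}, {v | G.Adj v a}, {v | G.Adj v d},
    {v | G.Adj v c ∧ ¬ G.Adj v a}, ⟨a, hab, had⟩, ⟨b, hab.symm⟩, ⟨c, hcd⟩, ⟨d, hcd.symm, hda⟩,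
    ?_, ?_, ?_⟩
  · simp only [List.pairwise_cons, List.mem_cons, List.not_mem_nil, or_false, forall_eq_or_imp,
      forall_eq, Set.disjoint_left, Set.mem_ofPred_eq, false_imp_iff, implies_true, and_true,
      List.Pairwise.nil]
    refine ⟨⟨?_, ?_, ?_⟩, ⟨?_, ?_⟩, ?_⟩ <;> intro v <;>
      rcases key v with p | p | p | p | p <;> simp [p]
  · ext v
    simp only [Set.mem_union, Set.mem_ofPred_eq]
    constructor
    · rintro (((⟨x, -⟩ | x) | x) | ⟨x, -⟩) <;> exact ⟨_, x⟩
    · rintro ⟨w, hw⟩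
      by_contra hv
      have e := F v w
      have : ¬ G.Adj v a ∧ ¬ G.Adj v b ∧ ¬ G.Adj v c ∧ ¬ G.Adj v d := by
        revert hv
        rcases key v with p | p | p | p | p <;> simp [p]
      simp [adjMatrix_apply, this, hw] at e
  · simp only [Set.mem_ofPred_eq]
    have G' : ∀ u v, (G.adjMatrix ℝ u v = 1 → G.Adj u v) ∧ (G.adjMatrix ℝ u v = 0 → ¬ G.Adj u v) :=
      fun u v => by simp [adjMatrix_apply]
    refine ⟨?_, ?_, ?_, ?_, ?_, ?_, ?_⟩ <;> intro u hu v hv <;>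
      first
      | refine (G' u v).1 ?_
        rw [F u v]
        revert hu hv
        rcases key u with p | p | p | p | p <;> rcases key v with q | q | q | q | q <;>
          simp [adjMatrix_apply, p, q]
      | refine (G' u v).2 ?_
        rw [F u v]
        revert hu hv
        rcases key u with p | p | p | p | p <;> rcases key v with q | q | q | q | q <;>
          simp [adjMatrix_apply, p, q]
end
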